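/- arXiv:1710.09287 — 4 statements merged into one kernel-verified Lean document; each statement's English description precedes it below -/
import Mathlib

section
/- Let ω ⊂ ℝ^d be a nonempty open connected set, and let μ⁰, μ¹ be compactly supported probability measures on ℝ^d, absolutely continuous with respect to the Lebesgue measure, with supp(μ⁰) ⊂ ω and supp(μ¹) ⊂ ω. Then for every T > 0 and every ε > 0 there exists a vector field u : ℝ^d × ℝ⁺ → ℝ^d, uniformly bounded, Lipschitz in space, measurable in time, and supported in ω, such that the solution μ(t) = Φ_t^u # μ⁰ of ∂_t μ + ∇·(u μ) = 0, μ(0) = μ⁰, satisfies W₁(μ(T), μ¹) ≤ ε and supp(μ(t)) ⊂ ω for all t ∈ [0,T]. -/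
open MeasureTheory Set
open scoped ENNReal NNReal

noncomputable section

/-- The Euclidean space `ℝ^d`. -/
abbrev Euc (d : ℕ) := EuclideanSpace ℝ (Fin d)

/-- The support of a Borel measure: points all of whose open neighborhoods have
positive measure. -/
def msupport {d : ℕ} (μ : Measure (Euc d)) : Set (Euc d) :=
  {x | ∀ U : Set (Euc d), IsOpen U → x ∈ U → 0 < μ U}

/-- `Φ` is the flow of the (time-dependent) vector field `w`, in the Carathéodory
(integral) sense. -/
def IsFlow {d : ℕ} (w : Euc d → ℝ → Euc d) (Φ : ℝ → Euc d → Euc d) : Prop :=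
  ∀ x t, Φ t x = x + ∫ s in (0:ℝ)..t, w (Φ s x) s

/-- Wasserstein distance `W₁`, as an infimum over couplings. -/
def W1 {d : ℕ} (μ ν : Measure (Euc d)) : ℝ≥0∞ :=
  ⨅ (π : Measure (Euc d × Euc d)) (_ : π.map Prod.fst = μ) (_ : π.map Prod.snd = ν),
    ∫⁻ q, edist q.1 q.2 ∂π

/-- A vector field uniformly bounded, Lipschitz in space and measurable in time. -/
def IsRegularField {d : ℕ} (w : Euc d → ℝ → Euc d) : Prop :=
  (∃ C : ℝ, ∀ x t, ‖w x t‖ ≤ C) ∧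
  (∃ K : ℝ≥0, ∀ t : ℝ, LipschitzWith K fun x => w x t) ∧
  ∀ x, Measurable fun t => w x t


def SolC {d : ℕ} (v : Euc d → Euc d) (γ : ℝ → Euc d) : Prop :=
  ContinuousOn γ (Icc 0 1) ∧ ∀ t ∈ Ico (0:ℝ) 1, HasDerivWithinAt γ (v (γ t)) (Ici t) t

theorem exists_solC {d : ℕ} {v : Euc d → Euc d} {K : ℝ≥0} (hv : LipschitzWith K v)
    {C : ℝ} (hC : ∀ x, ‖v x‖ ≤ C) (x : Euc d) :
    ∃ γ : ℝ → Euc d, γ 0 = x ∧ ∀ t ∈ Icc (0:ℝ) 1, HasDerivWithinAt γ (v (γ t)) (Icc 0 1) t := by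
  have hC0 : 0 ≤ C := (norm_nonneg _).trans (hC x)
  have hP : IsPicardLindelof (fun _ : ℝ => v) (⟨0, by simp⟩ : Icc (0:ℝ) 1) x ⟨C, hC0⟩ 0 ⟨C, hC0⟩ K := by
    refine ⟨fun t _ => hv.lipschitzOnWith, fun x _ => continuousOn_const, fun t _ x _ => hC x, ?_⟩
    simp
  obtain ⟨α, h0, h⟩ := hP.exists_eq_forall_mem_Icc_hasDerivWithinAt₀
  exact ⟨α, h0, h⟩

theorem solC_of {d : ℕ} {v : Euc d → Euc d} {γ : ℝ → Euc d}
    (h : ∀ t ∈ Icc (0:ℝ) 1, HasDerivWithinAt γ (v (γ t)) (Icc 0 1) t) : SolC v γ := by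
  refine ⟨fun t ht => (h t ht).continuousWithinAt, fun t ht => ?_⟩
  have := h t ⟨ht.1, ht.2.le⟩
  refine this.mono_of_mem_nhdsWithin ?_
  have h1 : Icc t 1 ∈ nhdsWithin t (Ici t) := Icc_mem_nhdsGE ht.2
  exact Filter.mem_of_superset h1 (Icc_subset_Icc_left ht.1)

theorem solC_dist {d : ℕ} {v : Euc d → Euc d} {K : ℝ≥0} (hv : LipschitzWith K v)
    {γ η : ℝ → Euc d} (hγ : SolC v γ) (hη : SolC v η) :
    dist (γ 1) (η 1) ≤ dist (γ 0) (η 0) * Real.exp K := by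
  have := dist_le_of_trajectories_ODE (v := fun _ => v) (fun _ => hv) hγ.1 hγ.2 hη.1 hη.2 le_rfl 1 (by simp)
  simpa using this

theorem exists_flowmap {d : ℕ} {v : Euc d → Euc d} {K : ℝ≥0} (hv : LipschitzWith K v)
    {C : ℝ} (hC : ∀ x, ‖v x‖ ≤ C) :
    ∃ ψ ψ' : Euc d → Euc d, (∃ L, LipschitzWith L ψ) ∧ (∃ L, LipschitzWith L ψ') ∧
      (∀ x, ψ' (ψ x) = x) ∧ (∀ γ, SolC v γ → γ 1 = ψ (γ 0)) := by
  have hv' : LipschitzWith K (fun x => - v x) := hv.neg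
  have hC' : ∀ x, ‖- v x‖ ≤ C := by simpa using hC
  choose α hα0 hα using exists_solC hv hC
  choose β hβ0 hβ using exists_solC hv' hC'
  have key : ∀ {w : Euc d → Euc d} (hw : LipschitzWith K w) {γ η : ℝ → Euc d}, SolC w γ →
      SolC w η → γ 0 = η 0 → γ 1 = η 1 := by
    intro w hw γ η h1 h2 h0
    have := solC_dist hw h1 h2
    rw [h0, dist_self, zero_mul] at this
    exact dist_le_zero.1 this
  refine ⟨fun x => α x 1, fun x => β x 1, ⟨(Real.exp K).toNNReal, ?_⟩, ⟨(Real.exp K).toNNReal, ?_⟩,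
    ?_, ?_⟩
  · refine LipschitzWith.of_dist_le_mul fun x y => ?_
    have := solC_dist hv (solC_of (hα x)) (solC_of (hα y))
    rw [hα0, hα0, mul_comm] at this
    rwa [Real.coe_toNNReal _ (Real.exp_pos _).le]
  · refine LipschitzWith.of_dist_le_mul fun x y => ?_
    have := solC_dist hv' (solC_of (hβ x)) (solC_of (hβ y))
    rw [hβ0, hβ0, mul_comm] at this
    rwa [Real.coe_toNNReal _ (Real.exp_pos _).le]
  · intro x
    have h1 : SolC (fun x => - v x) (fun t => α x (1 - t)) := by
      apply solC_of
      intro t ht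
      have h2 := hα x (1 - t) ⟨by linarith [ht.2], by linarith [ht.1]⟩
      have h3 : HasDerivWithinAt (fun t : ℝ => 1 - t) (-1) (Icc 0 1) t := by
        simpa using (hasDerivWithinAt_id t (Icc (0:ℝ) 1)).const_sub 1
      have := h2.scomp t h3 (fun s hs => ⟨by linarith [hs.2], by linarith [hs.1]⟩)
      simpa using! this
    have := key hv' (solC_of (hβ (α x 1))) h1 (by simp [hβ0])
    simpa [hα0] using this
  · intro γ hγ
    exact key hv hγ (solC_of (hα (γ 0))) (by simp [hα0])

def IsCurve {d : ℕ} (u : Euc d → ℝ → Euc d) (T : ℝ) (γ : ℝ → Euc d) : Prop :=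
  IntervalIntegrable (fun s => u (γ s) s) volume 0 T ∧
    ∀ t ∈ Icc (0:ℝ) T, γ t = γ 0 + ∫ s in (0:ℝ)..t, u (γ s) s

theorem IsCurve.continuousOn {d : ℕ} {u : Euc d → ℝ → Euc d} {T : ℝ} (hT : 0 ≤ T) {γ : ℝ → Euc d}
    (h : IsCurve u T γ) : ContinuousOn γ (Icc 0 T) := by
  have h1 := intervalIntegral.continuousOn_primitive_interval' h.1 (left_mem_uIcc)
  rw [uIcc_of_le hT] at h1
  exact (continuousOn_const.add h1).congr h.2

theorem IsCurve.solC {d : ℕ} {v : Euc d → Euc d} (hv : Continuous v) {T : ℝ} (hT : 0 < T)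
    {γ : ℝ → Euc d} (h : IsCurve (fun x _ => T⁻¹ • v x) T γ) : SolC v (fun s => γ (T * s)) := by
  have hc := h.continuousOn hT.le
  set δ : ℝ → Euc d := fun s => γ (projIcc 0 T hT.le s) with hδ
  have hδc : Continuous δ := by
    have := continuousOn_iff_continuous_domRestrict.1 hc
    exact this.comp continuous_projIcc
  have hδe : ∀ s ∈ Icc (0:ℝ) T, δ s = γ s := fun s hs => by simp [hδ, projIcc_of_mem hT.le hs]
  set G : ℝ → Euc d := fun t => γ 0 + ∫ s in (0:ℝ)..t, T⁻¹ • v (δ s) with hG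
  have hGe : ∀ t ∈ Icc (0:ℝ) T, G t = γ t := by
    intro t ht
    rw [h.2 t ht, hG]
    simp only
    congr 1
    apply intervalIntegral.integral_congr
    intro s hs
    rw [uIcc_of_le ht.1] at hs
    simp only
    rw [hδe s ⟨hs.1, hs.2.trans ht.2⟩]
  have hGd : ∀ t, HasDerivAt G (T⁻¹ • v (δ t)) t := by
    intro t
    have : Continuous fun s => T⁻¹ • v (δ s) := by fun_prop
    exact (this.integral_hasStrictDerivAt 0 t).hasDerivAt.const_add _
  apply solC_of
  intro t ht
  have hm : ∀ s ∈ Icc (0:ℝ) 1, T * s ∈ Icc (0:ℝ) T := fun s hs =>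
    ⟨mul_nonneg hT.le hs.1, by nlinarith [hs.2]⟩
  have h1 : HasDerivAt (fun s => G (T * s)) (v (δ (T * t))) t := by
    have h3 : HasDerivAt (fun t : ℝ => T * t) T t := by
      simpa using (hasDerivAt_id t).const_mul T
    have := (hGd (T * t)).scomp t h3
    simpa [smul_smul, hT.ne'] using! this
  rw [hδe _ (hm t ht)] at h1
  exact h1.hasDerivWithinAt.congr (fun s hs => (hGe _ (hm s hs)).symm) ((hGe _ (hm t ht)).symm)

/-- `g` is realizable by fields supported in `V`. -/
structure Rz {d : ℕ} (V : Set (Euc d)) (g : Euc d → Euc d) : Prop where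
  meas : Measurable g
  ac : ∀ N : Set (Euc d), volume N = 0 → volume (g ⁻¹' N) = 0
  off : ∀ x, x ∉ V → g x = x
  maps : ∀ x, x ∈ V → g x ∈ V
  real : ∀ T : ℝ, 0 < T → ∃ u : Euc d → ℝ → Euc d, IsRegularField u ∧
    (∀ x t, x ∉ V → u x t = 0) ∧ ∀ γ, IsCurve u T γ → γ T = g (γ 0)

theorem lipschitz_null {d : ℕ} {f : Euc d → Euc d} {L : ℝ≥0} (hf : LipschitzWith L f)
    {N : Set (Euc d)} (hN : volume N = 0) : volume (f '' N) = 0 := by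
  set μH' := Measure.hausdorffMeasure (X := Euc d) (Module.finrank ℝ (Euc d))
  have h1 : (volume : Measure (Euc d)) ≪ μH' := Measure.absolutelyContinuous_isAddHaarMeasure _ _
  have h2 : μH' ≪ (volume : Measure (Euc d)) := Measure.absolutelyContinuous_isAddHaarMeasure _ _
  apply h1
  have := hf.hausdorffMeasure_image_le (d := Module.finrank ℝ (Euc d)) (by positivity) N
  rw [h2 hN, mul_zero] at this
  exact le_antisymm this zero_le

theorem Rz.id {d : ℕ} (V : Set (Euc d)) : Rz V (fun x => x) where
  meas := measurable_id
  ac := fun N h => h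
  off := fun _ _ => rfl
  maps := fun _ h => h
  real := fun T hT => ⟨fun _ _ => 0, ⟨⟨0, by simp⟩, ⟨0, fun _ => LipschitzWith.const _⟩,
    fun _ => measurable_const⟩, fun _ _ _ => rfl, fun γ hγ => by
      simpa using hγ.2 T ⟨hT.le, le_rfl⟩⟩

theorem Rz.mono {d : ℕ} {V W : Set (Euc d)} {g : Euc d → Euc d} (h : Rz V g) (hVW : V ⊆ W) :
    Rz W g where
  meas := h.meas
  ac := h.ac
  off := fun x hx => h.off x (fun hx' => hx (hVW hx'))
  maps := fun x hx => by
    by_cases hV : x ∈ V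
    · exact hVW (h.maps x hV)
    · rwa [h.off x hV]
  real := fun T hT => by
    obtain ⟨u, h1, h2, h3⟩ := h.real T hT
    exact ⟨u, h1, fun x t hx => h2 x t (fun hx' => hx (hVW hx')), h3⟩

theorem Rz.comp {d : ℕ} {V : Set (Euc d)} {g g' : Euc d → Euc d} (h' : Rz V g') (h : Rz V g) :
    Rz V (fun x => g' (g x)) where
  meas := h'.meas.comp h.meas
  ac := fun N hN => h.ac _ (h'.ac N hN)
  off := fun x hx => by rw [h.off x hx, h'.off x hx]
  maps := fun x hx => h'.maps _ (h.maps x hx)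
  real := fun T hT => by
    have hT2 : 0 < T / 2 := by positivity
    obtain ⟨u1, ⟨⟨C1, hC1⟩, ⟨K1, hK1⟩, hm1⟩, hz1, hr1⟩ := h.real (T / 2) hT2
    obtain ⟨u2, ⟨⟨C2, hC2⟩, ⟨K2, hK2⟩, hm2⟩, hz2, hr2⟩ := h'.real (T / 2) hT2
    refine ⟨fun x t => if t < T / 2 then u1 x t else u2 x (t - T / 2), ⟨⟨max C1 C2, ?_⟩,
      ⟨max K1 K2, ?_⟩, ?_⟩, ?_, ?_⟩
    · intro x t
      dsimp only
      split_ifs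
      · exact (hC1 _ _).trans (le_max_left _ _)
      · exact (hC2 _ _).trans (le_max_right _ _)
    · intro t
      by_cases ht : t < T / 2
      · simp only [ht, if_true]
        exact (hK1 t).weaken (le_max_left _ _)
      · simp only [ht, if_false]
        exact (hK2 _).weaken (le_max_right _ _)
    · intro x
      refine Measurable.ite measurableSet_Iio (hm1 x) ((hm2 x).comp (measurable_id.sub_const _))
    · intro x t hx
      simp [hz1 x _ hx, hz2 x _ hx]
    · intro γ ⟨hγi, hγ⟩
      set U : Euc d → ℝ → Euc d := fun x t => if t < T / 2 then u1 x t else u2 x (t - T / 2) with hU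
      have hi1 : IntervalIntegrable (fun s => U (γ s) s) volume 0 (T / 2) :=
        hγi.mono_set (by rw [uIcc_of_le hT2.le, uIcc_of_le hT.le]; exact Icc_subset_Icc_right (by linarith))
      have hi2 : IntervalIntegrable (fun s => U (γ s) s) volume (T / 2) T :=
        hγi.mono_set (by rw [uIcc_of_le (by linarith), uIcc_of_le hT.le]; exact Icc_subset_Icc_left (by linarith))
      have e1 : γ (T / 2) = g (γ 0) := by
        apply hr1
        refine ⟨?_, ?_⟩
        · refine hi1.congr_ae ?_
          rw [uIoc_of_le hT2.le]
          have : ∀ᵐ s ∂(volume : Measure ℝ), s ≠ T / 2 := by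
            simp [ae_iff]
          filter_upwards [ae_restrict_mem measurableSet_Ioc, ae_restrict_of_ae this] with s hs hs'
          have : s < T / 2 := lt_of_le_of_ne hs.2 hs'
          simp [hU, this]
        · intro t ht
          rw [hγ t ⟨ht.1, ht.2.trans (by linarith)⟩]
          congr 1
          apply intervalIntegral.integral_congr_ae
          have : ∀ᵐ s ∂(volume : Measure ℝ), s ≠ T / 2 := by
            simp [ae_iff]
          filter_upwards [this] with s hs' hs
          rw [uIoc_of_le ht.1] at hs
          have : s < T / 2 := lt_of_le_of_ne (hs.2.trans ht.2) hs'
          simp [hU, this]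
      have e2 : γ (T / 2 + T / 2) = g' (γ (0 + T / 2)) := by
        refine hr2 (fun s => γ (s + T / 2)) ⟨?_, ?_⟩
        · have := hi2.comp_add_right (T / 2)
          have hh : T - T / 2 = T / 2 := by ring
          rw [sub_self, hh] at this
          refine this.congr ?_
          intro s hs
          rw [uIoc_of_le hT2.le] at hs
          have : ¬ (s + T / 2 < T / 2) := by linarith [hs.1]
          simp [hU, hs.1.le]
        · intro t ht
          have a1 := hγ (t + T / 2) ⟨by linarith [ht.1], by linarith [ht.2]⟩
          have a2 := hγ (T / 2) ⟨by linarith, by linarith⟩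
          have a3 : IntervalIntegrable (fun s => U (γ s) s) volume (T / 2) (t + T / 2) :=
            hi2.mono_set (by
              rw [uIcc_of_le (by linarith [ht.1]), uIcc_of_le (by linarith)]
              exact Icc_subset_Icc_right (by linarith [ht.2]))
          rw [← intervalIntegral.integral_add_adjacent_intervals hi1 a3, ← add_assoc, ← a2] at a1
          show γ (t + T / 2) = γ (0 + T / 2) + _
          rw [zero_add, a1]
          congr 1
          have := intervalIntegral.integral_comp_add_right (a := 0) (b := t) (fun s => U (γ s) s) (T / 2)
          rw [zero_add] at this
          rw [← this]
          apply intervalIntegral.integral_congr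
          intro s hs
          rw [uIcc_of_le ht.1] at hs
          have : ¬ (s + T / 2 < T / 2) := by linarith [hs.1]
          simp [hU, hs.1]
      rw [zero_add, add_halves, e1] at e2
      exact e2

theorem rz_of_field {d : ℕ} {V : Set (Euc d)} {v : Euc d → Euc d} {K : ℝ≥0}
    (hv : LipschitzWith K v) {C : ℝ} (hC : ∀ x, ‖v x‖ ≤ C) (hz : ∀ x, x ∉ V → v x = 0) :
    ∃ g, Rz V g ∧ ∀ γ, SolC v γ → γ 1 = g (γ 0) := by
  obtain ⟨ψ, ψ', ⟨L, hL⟩, ⟨L', hL'⟩, hinv, hs⟩ := exists_flowmap hv hC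
  have hoff : ∀ x, x ∉ V → ψ x = x := by
    intro x hx
    refine (hs (fun _ => x) ⟨continuousOn_const, fun t _ => ?_⟩).symm
    simp only [hz x hx]
    exact hasDerivWithinAt_const _ _ _
  have hinj : Function.Injective ψ := Function.LeftInverse.injective hinv
  refine ⟨ψ, ⟨hL.continuous.measurable, ?_, hoff, ?_, ?_⟩, hs⟩
  · intro N hN
    refine measure_mono_null ?_ (lipschitz_null hL' hN)
    intro x hx
    exact ⟨ψ x, hx, hinv x⟩
  · intro x hx
    by_contra h
    have := hinj (hoff _ h)
    rw [this] at h
    exact h hx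
  · intro T hT
    refine ⟨fun x _ => T⁻¹ • v x, ⟨⟨T⁻¹ * C, ?_⟩, ⟨‖T⁻¹‖₊ * K, ?_⟩, fun x => measurable_const⟩, ?_, ?_⟩
    · intro x t
      rw [norm_smul, Real.norm_of_nonneg (by positivity)]
      exact mul_le_mul_of_nonneg_left (hC x) (by positivity)
    · intro t
      exact (lipschitzWith_smul T⁻¹).comp hv
    · intro x t hx
      simp [hz x hx]
    · intro γ hγ
      have := hs _ (hγ.solC hv.continuous hT)
      simpa using this

theorem squeeze_compact {d : ℕ} {V K : Set (Euc d)} (hVo : IsOpen V) (hVc : Convex ℝ V)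
    (hK : IsCompact K) (hKV : K ⊆ V) {q : Euc d} (hq : q ∈ V) {r : ℝ} (hr : 0 < r) :
    ∃ g, Rz V g ∧ ∀ x ∈ K, g x ∈ Metric.ball q r := by
  set K' := (fun p : ℝ × Euc d => q + p.1 • (p.2 - q)) '' (Icc (0:ℝ) 1 ×ˢ K) with hK'
  have hK'c : IsCompact K' := (isCompact_Icc.prod hK).image (by fun_prop)
  have hK'V : K' ⊆ V := by
    rintro _ ⟨⟨t, x⟩, ⟨ht, hx⟩, rfl⟩
    exact hVc.add_smul_sub_mem hq (hKV hx) ht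
  obtain ⟨W, hWo, hKW, hWV, hWc⟩ := exists_open_between_and_isCompact_closure hK'c hVo hK'V
  obtain ⟨f, hf0, hf1, -⟩ := exists_contMDiffMap_zero_one_of_isClosed (n := 1) (modelWithCornersSelf ℝ (Euc d))
    (s := Wᶜ) (t := K') hWo.isClosed_compl hK'c.isClosed (disjoint_compl_left_iff_subset.2 hKW)
  have hfc : ContDiff ℝ 1 (f : Euc d → ℝ) := f.contMDiff.contDiff
  obtain ⟨M, hM⟩ := hK.isBounded.subset_ball q
  obtain ⟨R, hR0, hR⟩ : ∃ R : ℝ, 0 < R ∧ ∀ x ∈ K, Real.exp (-R) * ‖x - q‖ < r := by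
    have h1 : Filter.Tendsto (fun R : ℝ => Real.exp (-R) * M) Filter.atTop (nhds (0 * M)) :=
      (Real.tendsto_exp_neg_atTop_nhds_zero).mul_const M
    rw [zero_mul] at h1
    obtain ⟨R, hR, hR0⟩ := ((h1.eventually (gt_mem_nhds hr)).and (Filter.eventually_gt_atTop 0)).exists
    refine ⟨R, hR0, fun x hx => lt_of_le_of_lt ?_ hR⟩
    have : ‖x - q‖ < M := by simpa [dist_eq_norm] using hM hx
    exact mul_le_mul_of_nonneg_left this.le (Real.exp_pos _).le
  set v : Euc d → Euc d := fun x => f x • (-R • (x - q)) with hv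
  have hvc : ContDiff ℝ 1 v := by
    apply hfc.smul
    exact (contDiff_id.sub contDiff_const).const_smul (-R)
  have hvs : HasCompactSupport v := by
    apply HasCompactSupport.of_support_subset_isCompact hWc
    intro x hx
    apply subset_closure
    by_contra h
    apply hx
    have : f x = 0 := hf0 h
    simp [hv, this]
  obtain ⟨L, hL⟩ := ContDiff.lipschitzWith_of_hasCompactSupport hvs hvc one_ne_zero
  obtain ⟨C, hC⟩ := hvs.exists_bound_of_continuous hvc.continuous
  obtain ⟨g, hg, hs⟩ := rz_of_field (V := V) hL hC (fun x hx => by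
    have : f x = 0 := hf0 (fun h => hx (hWV (subset_closure h)))
    simp [hv, this])
  refine ⟨g, hg, fun x hx => ?_⟩
  have hsol : SolC v (fun t => q + Real.exp (-R * t) • (x - q)) := by
    have hd : ∀ t : ℝ, HasDerivAt (fun t : ℝ => q + Real.exp (-R * t) • (x - q))
        ((Real.exp (-R * t) * -R) • (x - q)) t := by
      intro t
      have h1 : HasDerivAt (fun t : ℝ => -R * t) (-R) t := by
        simpa using (hasDerivAt_id t).const_mul (-R)
      exact (h1.exp.smul_const (x - q)).const_add q
    refine solC_of fun t ht => ?_
    have hmem : q + Real.exp (-R * t) • (x - q) ∈ K' := by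
      refine ⟨(Real.exp (-R * t), x), ⟨⟨(Real.exp_pos _).le, ?_⟩, hx⟩, rfl⟩
      show Real.exp (-R * t) ≤ 1
      rw [Real.exp_le_one_iff]
      nlinarith [ht.1]
    have : f (q + Real.exp (-R * t) • (x - q)) = 1 := hf1 hmem
    have hval : v (q + Real.exp (-R * t) • (x - q)) = (Real.exp (-R * t) * -R) • (x - q) := by
      simp only [hv, this, one_smul, add_sub_cancel_left, smul_smul]
      congr 1
      ring
    show HasDerivWithinAt _ (v (q + Real.exp (-R * t) • (x - q))) _ _
    rw [hval]
    exact (hd t).hasDerivWithinAt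
  have := hs _ hsol
  simp only [mul_zero, neg_mul, neg_zero, Real.exp_zero, one_smul, add_sub_cancel, mul_one] at this
  rw [← this, Metric.mem_ball, dist_eq_norm, add_sub_cancel_left, norm_smul,
    Real.norm_of_nonneg (Real.exp_pos _).le]
  exact hR x hx

theorem squeeze {d : ℕ} {V O : Set (Euc d)} (hVo : IsOpen V) (hVc : Convex ℝ V)
    (hO : IsOpen O) (hVO : (V ∩ O).Nonempty) (μ : Measure (Euc d)) [IsFiniteMeasure μ]
    {η : ℝ} (hη : 0 < η) :
    ∃ g, Rz V g ∧ μ.real (V \ g ⁻¹' O) ≤ η := by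
  obtain ⟨q, hqV, hqO⟩ := hVO
  obtain ⟨K, hKV, hK, hμ⟩ := hVo.measurableSet.exists_isCompact_sdiff_lt (μ := μ) (measure_ne_top _ _)
    (ε := ENNReal.ofReal η) (by simpa using hη)
  obtain ⟨r, hr, hrO⟩ := Metric.isOpen_iff.1 hO q hqO
  obtain ⟨g, hg, hgK⟩ := squeeze_compact hVo hVc hK hKV hqV hr
  refine ⟨g, hg, ?_⟩
  have : V \ g ⁻¹' O ⊆ V \ K := fun x hx => ⟨hx.1, fun hxK => hx.2 (hrO (hgK x hxK))⟩
  refine (measureReal_mono this).trans ?_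
  exact ENNReal.toReal_le_of_le_ofReal hη.le hμ.le

inductive Chn {d : ℕ} (V : Set (Euc d)) (r : ℝ) (B : Set (Euc d)) : Set (Euc d) → Prop
  | base : Chn V r B B
  | step (U : Set (Euc d)) (x : Euc d) (ρ : ℝ) : Chn V r B U → 0 < ρ → ρ ≤ r →
      Metric.closedBall x ρ ⊆ V → (U ∩ Metric.ball x ρ).Nonempty → Chn V r B (U ∪ Metric.ball x ρ)

theorem Chn.base_subset {d : ℕ} {V : Set (Euc d)} {r : ℝ} {B U : Set (Euc d)} (h : Chn V r B U) :
    B ⊆ U := by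
  induction h with
  | base => exact subset_rfl
  | step U x ρ _ _ _ _ _ ih => exact ih.trans subset_union_left

theorem Chn.isOpen {d : ℕ} {V : Set (Euc d)} {r : ℝ} {B U : Set (Euc d)} (h : Chn V r B U)
    (hB : IsOpen B) : IsOpen U := by
  induction h with
  | base => exact hB
  | step U x ρ _ _ _ _ _ ih => exact ih.union Metric.isOpen_ball

theorem Chn.union {d : ℕ} {V : Set (Euc d)} {r : ℝ} {B U W : Set (Euc d)} (h : Chn V r B U)
    (h' : Chn V r B W) : Chn V r B (U ∪ W) := by
  induction h' with
  | base => rwa [union_eq_left.2 h.base_subset]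
  | step W x ρ _ h1 h2 h3 h4 ih =>
    rw [← union_assoc]
    exact Chn.step _ x ρ ih h1 h2 h3 (h4.mono (inter_subset_inter_left _ subset_union_right))

theorem exists_chn {d : ℕ} {V : Set (Euc d)} (hVo : IsOpen V) (hVc : IsPreconnected V) {r : ℝ} (hr : 0 < r)
    {B : Set (Euc d)} (hBo : IsOpen B) (hB : (V ∩ B).Nonempty) {K : Set (Euc d)} (hK : IsCompact K)
    (hKV : K ⊆ V) : ∃ U, Chn V r B U ∧ K ⊆ U := by
  have hloc : ∀ x ∈ V, ∃ ρ, 0 < ρ ∧ ρ ≤ r ∧ Metric.closedBall x ρ ⊆ V := by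
    intro x hx
    obtain ⟨ρ, hρ, h⟩ := Metric.nhds_basis_closedBall.mem_iff.1 (hVo.mem_nhds hx)
    exact ⟨min ρ r, lt_min hρ hr, min_le_right _ _,
      (Metric.closedBall_subset_closedBall (min_le_left _ _)).trans h⟩
  set S := ⋃ U : {U // Chn V r B U}, (U : Set (Euc d)) with hS
  have hSo : IsOpen S := isOpen_iUnion fun U => U.2.isOpen hBo
  have hVS : V ⊆ S := by
    refine hVc.subset_of_closure_inter_subset hSo (hB.mono ?_) ?_
    · exact inter_subset_inter_right _ (subset_iUnion (fun U : {U // Chn V r B U} => (U : Set (Euc d))) ⟨B, Chn.base⟩)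
    · rintro x ⟨hxc, hxV⟩
      obtain ⟨ρ, h1, h2, h3⟩ := hloc x hxV
      obtain ⟨y, hy, hyS⟩ := mem_closure_iff.1 hxc _ Metric.isOpen_ball (Metric.mem_ball_self h1)
      obtain ⟨⟨U, hU⟩, hyU⟩ := mem_iUnion.1 hyS
      exact mem_iUnion.2 ⟨⟨_, Chn.step U x ρ hU h1 h2 h3 ⟨y, hyU, hy⟩⟩, Or.inr (Metric.mem_ball_self h1)⟩
  have : Nonempty {U // Chn V r B U} := ⟨⟨B, Chn.base⟩⟩
  obtain ⟨U, hU⟩ := hK.elim_directed_cover (fun U : {U // Chn V r B U} => (U : Set (Euc d)))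
    (fun U => U.2.isOpen hBo) (hKV.trans hVS) (by
      intro U W
      exact ⟨⟨_, U.2.union W.2⟩, subset_union_left, subset_union_right⟩)
  exact ⟨U, U.2, hU⟩

theorem Chn.subset {d : ℕ} {V : Set (Euc d)} {r : ℝ} {B U : Set (Euc d)} (h : Chn V r B U)
    (hB : B ⊆ V) : U ⊆ V := by
  induction h with
  | base => exact hB
  | step U x ρ _ _ _ h3 _ ih => exact union_subset ih (Metric.ball_subset_closedBall.trans h3)

theorem gather_chn {d : ℕ} {V : Set (Euc d)} {r : ℝ} {B U : Set (Euc d)} (h : Chn V r B U)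
    (hB : IsOpen B) : ∀ (μ : Measure (Euc d)) [IsFiniteMeasure μ] (η : ℝ), 0 < η →
    ∃ g, Rz U g ∧ μ.real (U \ g ⁻¹' B) ≤ η := by
  induction h with
  | base => 
    intro μ _ η hη
    exact ⟨_, Rz.id _, by simpa using hη.le⟩
  | step U x ρ hU h1 h2 h3 h4 ih =>
    intro μ _ η hη
    obtain ⟨g1, hg1, e1⟩ := squeeze Metric.isOpen_ball (convex_ball x ρ) (hU.isOpen hB)
      (by rwa [inter_comm]) μ (half_pos hη)
    obtain ⟨g2, hg2, e2⟩ := ih (μ.map g1) (η / 2) (half_pos hη)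
    refine ⟨_, (hg2.mono subset_union_left).comp (hg1.mono subset_union_right), ?_⟩
    have hsub : (U ∪ Metric.ball x ρ) \ (fun x => g2 (g1 x)) ⁻¹' B ⊆
        (Metric.ball x ρ \ g1 ⁻¹' U) ∪ g1 ⁻¹' (U \ g2 ⁻¹' B) := by
      rintro y ⟨hy, hyB⟩
      by_cases hyU : g1 y ∈ U
      · exact Or.inr ⟨hyU, hyB⟩
      · left
        refine ⟨?_, hyU⟩
        by_contra hyb
        rw [hg1.off y hyb] at hyU
        exact hy.elim hyU hyb
    rw [map_measureReal_apply hg1.meas ((hU.isOpen hB).measurableSet.diff (hg2.meas hB.measurableSet))] at e2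
    calc _ ≤ _ := measureReal_mono hsub
      _ ≤ _ := measureReal_union_le _ _
      _ ≤ η / 2 + η / 2 := add_le_add e1 e2
      _ = η := by ring

theorem gather {d : ℕ} {U B : Set (Euc d)} (hUo : IsOpen U) (hUc : IsPreconnected U)
    (hB : IsOpen B) (hBU : B ⊆ U) (hBn : B.Nonempty) (μ : Measure (Euc d)) [IsFiniteMeasure μ]
    {η : ℝ} (hη : 0 < η) : ∃ g, Rz U g ∧ μ.real (U \ g ⁻¹' B) ≤ η := by
  obtain ⟨K, hKV, hK, hμ⟩ := hUo.measurableSet.exists_isCompact_sdiff_lt (μ := μ) (measure_ne_top _ _)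
    (ε := ENNReal.ofReal (η / 2)) (by simpa using hη)
  obtain ⟨W, hW, hKW⟩ := exists_chn hUo hUc one_pos hB (by rwa [inter_eq_right.2 hBU]) hK hKV
  obtain ⟨g, hg, e⟩ := gather_chn hW hB μ (η / 2) (half_pos hη)
  refine ⟨g, hg.mono (hW.subset hBU), ?_⟩
  have hsub : U \ g ⁻¹' B ⊆ (U \ K) ∪ (W \ g ⁻¹' B) := by
    rintro y ⟨h1, h2⟩
    by_cases h : y ∈ K
    · exact Or.inr ⟨hKW h, h2⟩
    · exact Or.inl ⟨h1, h⟩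
  calc _ ≤ _ := measureReal_mono hsub
      _ ≤ _ := measureReal_union_le _ _
      _ ≤ η / 2 + η / 2 := add_le_add (ENNReal.toReal_le_of_le_ofReal (half_pos hη).le hμ.le) e
      _ = η := by ring

theorem hyperplane_null {d : ℕ} {e : Euc d} (he : e ≠ 0) (c : ℝ) :
    volume {x : Euc d | inner ℝ e x = c} = 0 := by
  rcases eq_empty_or_nonempty {x : Euc d | inner ℝ e x = c} with h | ⟨x0, hx0⟩
  · rw [h]; simp
  · set S : Submodule ℝ (Euc d) := LinearMap.ker (innerSL ℝ e).toLinearMap with hS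
    have hSt : S ≠ ⊤ := by
      intro h
      have : e ∈ S := by rw [h]; trivial
      rw [hS, LinearMap.mem_ker] at this
      simp at this
      exact he this
    have := Measure.addHaar_submodule (volume : Measure (Euc d)) S hSt
    have h2 := measure_preimage_add_right (volume : Measure (Euc d)) (-x0) (S : Set (Euc d))
    rw [this] at h2
    rw [← h2]
    congr 1
    ext x
    simp only [mem_ofPred_eq, mem_preimage, SetLike.mem_coe, hS, LinearMap.mem_ker]
    simp only [mem_ofPred_eq] at hx0
    rw [← sub_eq_add_neg]
    show inner ℝ e x = c ↔ inner ℝ e (x - x0) = 0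
    rw [inner_sub_right, hx0, sub_eq_zero]

theorem exists_level {d : ℕ} {e p : Euc d} (he : e ≠ 0) {s : ℝ} (hs : 0 < s)
    (μ : Measure (Euc d)) [IsFiniteMeasure μ] (hac : μ ≪ volume) (hb : μ (Metric.ball p s)ᶜ = 0)
    {m : ℝ} (hm0 : 0 ≤ m) (hm : m ≤ μ.real univ) :
    ∃ c : ℝ, |c - inner ℝ e p| ≤ s * ‖e‖ ∧ μ.real {x | inner ℝ e x < c} = m ∧
      μ.real {x | c < inner ℝ e x} = μ.real univ - m := by
  set f : Euc d → ℝ := fun x => inner ℝ e x with hf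
  have hfm : Measurable f := (by fun_prop : Continuous f).measurable
  set ν := μ.map f with hν
  have hna : ∀ c, ν {c} = 0 := fun c => by
    rw [hν, Measure.map_apply hfm (measurableSet_singleton c)]
    exact hac (hyperplane_null he c)
  have : NullSingletonClass ν := ⟨hna⟩
  have hse : 0 < s * ‖e‖ := mul_pos hs (norm_pos_iff.2 he)
  set a := f p - s * ‖e‖ with ha
  set b := f p + s * ‖e‖ with hb'
  have hout : ν (Ioc a b)ᶜ = 0 := by
    rw [hν, Measure.map_apply hfm measurableSet_Ioc.compl]
    refine measure_mono_null ?_ hb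
    intro x hx hxb
    apply hx
    have h1 : |f x - f p| < s * ‖e‖ := by
      have : f x - f p = inner ℝ e (x - p) := by simp [hf, inner_sub_right]
      rw [this]
      refine (abs_real_inner_le_norm _ _).trans_lt ?_
      rw [mul_comm]
      apply mul_lt_mul_of_pos_right _ (norm_pos_iff.2 he)
      simpa [dist_eq_norm] using hxb
    rw [abs_lt] at h1
    exact ⟨by linarith [h1.1], by linarith [h1.2]⟩
  have hνu : ν.real univ = μ.real univ := by
    rw [hν, map_measureReal_apply hfm MeasurableSet.univ, preimage_univ]
  have hνab : ν.real (Ioc a b) = μ.real univ := by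
    rw [← hνu]
    refine measureReal_congr ?_
    rw [ae_eq_univ]; exact hout
  have hcont : Continuous fun t => ∫ x in a..t, (1:ℝ) ∂ν :=
    intervalIntegral.continuous_primitive (fun _ _ => intervalIntegrable_const) a
  have hab : a ≤ b := by linarith
  have hval : ∀ t, a ≤ t → ∫ x in a..t, (1:ℝ) ∂ν = ν.real (Ioc a t) := by
    intro t ht
    rw [intervalIntegral.integral_of_le ht]
    simp
  obtain ⟨c, hc, hcm⟩ := intermediate_value_Icc hab hcont.continuousOn (show m ∈ Icc _ _ by
    rw [hval b hab, hval a le_rfl, hνab]; simpa using ⟨hm0, hm⟩)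
  simp only at hcm
  rw [hval c hc.1] at hcm
  have hIic : ν.real (Iio c) = m := by
    rw [← hcm]
    refine measureReal_congr ?_
    have h1 : ∀ᵐ x ∂ν, x ∈ Ioc a b := by rw [ae_iff]; exact hout
    have h2 : ∀ᵐ x ∂ν, x ≠ c := by simp [ae_iff]
    filter_upwards [h1, h2] with x hx hx'
    apply propext
    show x < c ↔ (a < x ∧ x ≤ c)
    exact ⟨fun h => ⟨hx.1, h.le⟩, fun h => lt_of_le_of_ne h.2 hx'⟩
  have hIoi : ν.real (Ioi c) = μ.real univ - m := by
    have h1 : ν.real (Ici c) = ν.real (Ioi c) := measureReal_congr Ioi_ae_eq_Ici.symm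
    rw [← h1, ← compl_Iio, measureReal_compl measurableSet_Iio, hνu, hIic]
  refine ⟨c, ?_, ?_, ?_⟩
  · rw [abs_le]; exact ⟨by linarith [hc.1], by linarith [hc.2]⟩
  · rw [hν, map_measureReal_apply hfm measurableSet_Iio] at hIic
    exact hIic
  · rw [hν, map_measureReal_apply hfm measurableSet_Ioi] at hIoi
    exact hIoi

theorem Rz.map_ac {d : ℕ} {V : Set (Euc d)} {g : Euc d → Euc d} (h : Rz V g) {μ : Measure (Euc d)}
    (hμ : μ ≪ volume) : μ.map g ≪ volume := by
  refine Measure.AbsolutelyContinuous.mk fun s hs h0 => ?_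
  rw [Measure.map_apply h.meas hs]
  exact hμ (h.ac _ h0)

theorem split_step {d : ℕ} {U' : Set (Euc d)} {x : Euc d} {ρ : ℝ} (hU' : IsOpen U')
    (hUc : IsPreconnected (U' ∪ Metric.ball x ρ)) (hn : (U' ∩ Metric.ball x ρ).Nonempty)
    (hD : (Metric.ball x ρ \ closure U').Nonempty) (μ : Measure (Euc d)) [IsFiniteMeasure μ]
    (hμ : μ ≪ volume) {m : ℝ} (hm : 0 ≤ m) {η : ℝ} (hη : 0 < η) :
    ∃ g, Rz (U' ∪ Metric.ball x ρ) g ∧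
      min m (μ.real (U' ∪ Metric.ball x ρ)) - η ≤
        μ.real ((U' ∪ Metric.ball x ρ) ∩ g ⁻¹' (Metric.ball x ρ \ closure U')) ∧
      μ.real (U' ∪ Metric.ball x ρ) - min m (μ.real (U' ∪ Metric.ball x ρ)) - η ≤
        μ.real ((U' ∪ Metric.ball x ρ) ∩ g ⁻¹' U') := by
  set B := Metric.ball x ρ with hB
  set U := U' ∪ B with hU
  set D := B \ closure U' with hDdef
  have hBo : IsOpen B := Metric.isOpen_ball
  have hBc : Convex ℝ B := convex_ball x ρ
  have hDo : IsOpen D := hBo.sdiff isClosed_closure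
  have hUo : IsOpen U := hU'.union hBo
  obtain ⟨q, hqB, hqU⟩ := hD
  obtain ⟨q', hq'U, hq'B⟩ := hn
  have hqq : q' - q ≠ 0 := by
    intro h
    rw [sub_eq_zero] at h
    exact hqU (subset_closure (h ▸ hq'U))
  set e := q' - q with he
  have hepos : 0 < ‖e‖ := norm_pos_iff.2 hqq
  set p := midpoint ℝ q q' with hp
  have hpB : p ∈ B := hBc.midpoint_mem hqB hq'B
  obtain ⟨s0, hs0, hs0B⟩ := Metric.isOpen_iff.1 hBo p hpB
  set s := min s0 (‖e‖ / 4) with hs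
  have hspos : 0 < s := lt_min hs0 (by positivity)
  have hsB : Metric.ball p s ⊆ B := (Metric.ball_subset_ball (min_le_left _ _)).trans hs0B
  obtain ⟨g1, hg1, e1⟩ := gather hUo hUc (Metric.isOpen_ball (x := p) (ε := s))
    (hsB.trans subset_union_right) ⟨p, Metric.mem_ball_self hspos⟩ μ (half_pos hη)
  set lam := ((μ.restrict U).map g1).restrict (Metric.ball p s) with hlam
  have hlac : lam ≪ volume :=
    Measure.restrict_le_self.absolutelyContinuous.trans
      (hg1.map_ac (Measure.restrict_le_self.absolutelyContinuous.trans hμ))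
  have hlb : lam (Metric.ball p s)ᶜ = 0 := by
    rw [hlam, Measure.restrict_apply measurableSet_ball.compl]; simp
  have hlapp : ∀ S : Set (Euc d), MeasurableSet S → lam.real S = μ.real (U ∩ g1 ⁻¹' (S ∩ Metric.ball p s)) := by
    intro S hS
    rw [hlam, measureReal_restrict_apply hS, map_measureReal_apply hg1.meas (hS.inter measurableSet_ball),
      measureReal_restrict_apply (hg1.meas (hS.inter measurableSet_ball)), inter_comm]
  set M := μ.real U with hM
  set M1 := lam.real univ with hM1
  have hMM1 : M ≤ M1 + η / 2 := by
    rw [hM1, hlapp _ MeasurableSet.univ, univ_inter]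
    have : U ⊆ (U ∩ g1 ⁻¹' Metric.ball p s) ∪ (U \ g1 ⁻¹' Metric.ball p s) := by
      rw [inter_union_sdiff]
    exact (measureReal_mono this).trans ((measureReal_union_le _ _).trans (by linarith))
  obtain ⟨c, hc, hcl, hcr⟩ := exists_level hqq hspos lam hlac hlb (m := min m M1)
    (le_min hm measureReal_nonneg) (min_le_right _ _)
  have hs4 : s * ‖e‖ ≤ ‖e‖ ^ 2 / 4 := by
    have : s ≤ ‖e‖ / 4 := min_le_right _ _
    nlinarith
  have hpe : inner ℝ e p - inner ℝ e q = ‖e‖ ^ 2 / 2 := by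
    rw [← inner_sub_right, hp, midpoint_sub_left, inner_smul_right, ← he, real_inner_self_eq_norm_sq]
    norm_num; ring
  have hpe' : inner ℝ e q' - inner ℝ e p = ‖e‖ ^ 2 / 2 := by
    have : inner ℝ e q' - inner ℝ e q = ‖e‖ ^ 2 := by
      rw [← inner_sub_right, ← he, real_inner_self_eq_norm_sq]
    linarith
  have he2 : 0 < ‖e‖ ^ 2 := by positivity
  rw [abs_le] at hc
  have hcq : inner ℝ e q < c := by linarith [hc.1]
  have hcq' : c < inner ℝ e q' := by linarith [hc.2]
  set H1 := {y : Euc d | inner ℝ e y < c} with hH1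
  set H2 := {y : Euc d | c < inner ℝ e y} with hH2
  have hH1o : IsOpen H1 := isOpen_lt (by fun_prop) continuous_const
  have hH2o : IsOpen H2 := isOpen_lt continuous_const (by fun_prop)
  have hlin : IsLinearMap ℝ (fun y : Euc d => inner ℝ e y) := (innerSL ℝ e).toLinearMap.isLinear
  have hH1c : Convex ℝ H1 := convex_halfSpace_lt hlin c
  have hH2c : Convex ℝ H2 := convex_halfSpace_gt hlin c
  obtain ⟨g2, hg2, e2⟩ := squeeze (hBo.inter hH1o) (hBc.inter hH1c) hDo
    ⟨q, ⟨hqB, hcq⟩, hqB, hqU⟩ lam (half_pos hη)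
  obtain ⟨g3, hg3, e3⟩ := squeeze (hBo.inter hH2o) (hBc.inter hH2c) hU'
    ⟨q', ⟨hq'B, hcq'⟩, hq'U⟩ lam (half_pos hη)
  have hlB : lam Bᶜ = 0 := measure_mono_null (compl_subset_compl.2 hsB) hlb
  have hinB : ∀ S : Set (Euc d), lam.real (B ∩ S) = lam.real S := by
    intro S
    refine measureReal_congr ?_
    have h1 : ∀ᵐ y ∂lam, y ∈ B := by rw [ae_iff]; exact hlB
    filter_upwards [h1] with y hy
    apply propext
    exact ⟨fun h => h.2, fun h => ⟨hy, h⟩⟩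
  have hsubB : ∀ S : Set (Euc d), B ∩ S ⊆ U := fun S => inter_subset_left.trans subset_union_right
  have hdiff : ∀ A S : Set (Euc d), lam.real A ≤ lam.real (A ∩ S) + lam.real (A \ S) := by
    intro A S
    have : A ⊆ (A ∩ S) ∪ (A \ S) := by rw [inter_union_sdiff]
    exact (measureReal_mono this).trans (measureReal_union_le _ _)
  refine ⟨_, (hg3.mono (hsubB _)).comp ((hg2.mono (hsubB _)).comp hg1), ?_, ?_⟩
  · have h1 : lam.real ((B ∩ H1) ∩ g2 ⁻¹' D) ≤ μ.real (U ∩ (fun y => g3 (g2 (g1 y))) ⁻¹' D) := by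
      rw [hlapp _ ((hBo.inter hH1o).measurableSet.inter (hg2.meas hDo.measurableSet))]
      refine measureReal_mono ?_
      rintro y ⟨hyU, ⟨⟨hyB, hyD⟩, -⟩⟩
      refine ⟨hyU, ?_⟩
      have h3 : g2 (g1 y) ∉ B ∩ H2 := by
        intro h
        have a : inner ℝ e (g2 (g1 y)) < c := (hg2.maps _ hyB).2
        have b : c < inner ℝ e (g2 (g1 y)) := h.2
        exact lt_asymm a b
      show g3 (g2 (g1 y)) ∈ D
      rw [hg3.off _ h3]; exact hyD
    have h2 := hdiff (B ∩ H1) (g2 ⁻¹' D)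
    rw [hinB, hcl] at h2
    have h4 : min m M ≤ min m M1 + η / 2 := by
      rcases le_total m M1 with h | h
      · rw [min_eq_left h]; linarith [min_le_left m M]
      · rw [min_eq_right h]; linarith [min_le_right m M]
    linarith
  · have h1 : lam.real ((B ∩ H2) ∩ g3 ⁻¹' U') ≤ μ.real (U ∩ (fun y => g3 (g2 (g1 y))) ⁻¹' U') := by
      rw [hlapp _ ((hBo.inter hH2o).measurableSet.inter (hg3.meas hU'.measurableSet))]
      refine measureReal_mono ?_
      rintro y ⟨hyU, ⟨⟨hyB, hyD⟩, -⟩⟩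
      refine ⟨hyU, ?_⟩
      have h3 : g1 y ∉ B ∩ H1 := by
        intro h
        have a : inner ℝ e (g1 y) < c := h.2
        have b : c < inner ℝ e (g1 y) := hyB.2
        exact lt_asymm a b
      show g3 (g2 (g1 y)) ∈ U'
      rw [hg2.off _ h3]; exact hyD
    have h2 := hdiff (B ∩ H2) (g3 ⁻¹' U')
    rw [hinB, hcr] at h2
    have h4 : M - min m M ≤ M1 - min m M1 + η / 2 := by
      rcases le_total m M1 with h | h
      · rw [min_eq_left h]
        rcases le_total m M with h' | h'
        · rw [min_eq_left h']; linarith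
        · rw [min_eq_right h']; linarith
      · rw [min_eq_right h]
        rcases le_total m M with h' | h'
        · rw [min_eq_left h']; linarith
        · rw [min_eq_right h']; linarith
    linarith

theorem exists_prod_coupling {d : ℕ} {x : Euc d} {ρ r : ℝ} (hρ : ρ ≤ r) (α β : Measure (Euc d))
    [IsFiniteMeasure α] [IsFiniteMeasure β] {A A' : Set (Euc d)} (hA : MeasurableSet A)
    (hA' : MeasurableSet A') (hAB : A ⊆ Metric.ball x ρ) (hAB' : A' ⊆ Metric.ball x ρ) :
    ∃ π : Measure (Euc d × Euc d), IsFiniteMeasure π ∧ π.map Prod.fst ≤ α.restrict A ∧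
      π.map Prod.snd ≤ β.restrict A' ∧ π {p | ENNReal.ofReal (2 * r) < edist p.1 p.2} = 0 ∧
      π.real univ = min (α.real A) (β.real A') := by
  set a := α A with ha
  set b := β A' with hb
  have hat : a ≠ ∞ := measure_ne_top _ _
  have hbt : b ≠ ∞ := measure_ne_top _ _
  by_cases h0 : max a b = 0
  · have ha0 : a = 0 := le_antisymm ((le_max_left _ _).trans h0.le) zero_le
    refine ⟨0, inferInstance, ?_, ?_, by simp, ?_⟩
    · simpa using Measure.zero_le _
    · simpa using Measure.zero_le _
    · simp only [measureReal_def, ← ha, ← hb, ha0]; simp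
  have hmt : max a b ≠ ∞ := by simp [hat, hbt]
  set c := (max a b)⁻¹ with hc
  have hct : c ≠ ∞ := ENNReal.inv_ne_top.2 h0
  have hca : c * a ≤ 1 := by
    calc c * a ≤ c * max a b := by gcongr; exact le_max_left _ _
      _ = 1 := ENNReal.inv_mul_cancel h0 hmt
  have hcb : c * b ≤ 1 := by
    calc c * b ≤ c * max a b := by gcongr; exact le_max_right _ _
      _ = 1 := ENNReal.inv_mul_cancel h0 hmt
  have hsm : ∀ (k : ℝ≥0∞) (μ : Measure (Euc d)), k ≤ 1 → k • μ ≤ μ := by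
    intro k μ hk
    refine Measure.le_iff.2 fun s _ => ?_
    rw [Measure.smul_apply, smul_eq_mul]
    exact mul_le_of_le_one_left zero_le hk
  refine ⟨c • (α.restrict A).prod (β.restrict A'), ?_, ?_, ?_, ?_, ?_⟩
  · exact Measure.smul_finite _ hct
  · rw [Measure.map_smul, Measure.map_fst_prod, Measure.restrict_apply_univ, smul_smul]
    exact hsm _ _ hcb
  · rw [Measure.map_smul, Measure.map_snd_prod, Measure.restrict_apply_univ, smul_smul]
    exact hsm _ _ hca
  · rw [Measure.smul_apply, Measure.prod_restrict, smul_eq_mul]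
    rw [Measure.restrict_apply' (hA.prod hA')]
    have : {p : Euc d × Euc d | ENNReal.ofReal (2 * r) < edist p.1 p.2} ∩ A ×ˢ A' = ∅ := by
      rw [eq_empty_iff_forall_notMem]
      rintro ⟨y, z⟩ ⟨h1, h2, h3⟩
      have hy := hAB h2
      have hz := hAB' h3
      simp only [Metric.mem_ball] at hy hz
      have : dist y z ≤ 2 * r := by
        have := dist_triangle_right y z x
        linarith
      have h4 : edist y z ≤ ENNReal.ofReal (2 * r) := by
        rw [edist_dist]; exact ENNReal.ofReal_le_ofReal this
      exact absurd h1 (not_lt.2 h4)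
    rw [this]; simp
  · have : (c • (α.restrict A).prod (β.restrict A')) univ = min a b := by
      rw [Measure.smul_apply, ← univ_prod_univ, Measure.prod_prod, Measure.restrict_apply_univ,
        Measure.restrict_apply_univ, smul_eq_mul, ← ha, ← hb]
      rcases le_total a b with h | h
      · rw [hc, max_eq_right h, min_eq_left h, mul_comm a, ← mul_assoc, ENNReal.inv_mul_cancel, one_mul]
        · rwa [max_eq_right h] at h0
        · exact hbt
      · rw [hc, max_eq_left h, min_eq_right h, ← mul_assoc, ENNReal.inv_mul_cancel, one_mul]
        · rwa [max_eq_left h] at h0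
        · exact hat
    rw [measureReal_def, this, measureReal_def, measureReal_def, ← ha, ← hb]
    rcases le_total a b with h | h
    · rw [min_eq_left h, min_eq_left ((ENNReal.toReal_le_toReal hat hbt).2 h)]
    · rw [min_eq_right h, min_eq_right ((ENNReal.toReal_le_toReal hbt hat).2 h)]

theorem Chn.isPreconnected {d : ℕ} {V : Set (Euc d)} {r : ℝ} {B U : Set (Euc d)} (h : Chn V r B U)
    (hB : IsPreconnected B) : IsPreconnected U := by
  induction h with
  | base => exact hB
  | step U x ρ _ _ _ _ h4 ih => exact ih.union' h4 (convex_ball x ρ).isPreconnected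

theorem Chn.closure_null {d : ℕ} {V : Set (Euc d)} {r : ℝ} {B U : Set (Euc d)} (h : Chn V r B U)
    (hB : volume (closure B \ B) = 0) : volume (closure U \ U) = 0 := by
  induction h with
  | base => exact hB
  | step U x ρ _ _ _ _ h4 ih =>
    have h1 : volume (closure (Metric.ball x ρ) \ Metric.ball x ρ) = 0 := by
      have := (convex_ball x ρ).addHaar_frontier (volume : Measure (Euc d))
      rwa [Metric.isOpen_ball.frontier_eq] at this
    refine measure_mono_null ?_ (measure_union_null ih h1)
    rw [closure_union]
    rintro y ⟨hy | hy, hn⟩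
    · exact Or.inl ⟨hy, fun h => hn (Or.inl h)⟩
    · exact Or.inr ⟨hy, fun h => hn (Or.inr h)⟩

theorem Chn.closure_subset {d : ℕ} {V : Set (Euc d)} {r : ℝ} {B U : Set (Euc d)} (h : Chn V r B U)
    (hB : closure B ⊆ V) : closure U ⊆ V := by
  induction h with
  | base => exact hB
  | step U x ρ _ _ _ h3 h4 ih =>
    rw [closure_union]
    exact union_subset ih (Metric.closure_ball_subset_closedBall.trans h3)

theorem Chn.isBounded {d : ℕ} {V : Set (Euc d)} {r : ℝ} {B U : Set (Euc d)} (h : Chn V r B U)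
    (hB : Bornology.IsBounded B) : Bornology.IsBounded U := by
  induction h with
  | base => exact hB
  | step U x ρ _ _ _ h3 h4 ih => exact ih.union Metric.isBounded_ball

theorem map_restrict_self {d : ℕ} {V S : Set (Euc d)} {g : Euc d → Euc d} (hg : Rz V g)
    (hS : MeasurableSet S) (hd : Disjoint S V) (lam : Measure (Euc d)) :
    (lam.restrict S).map g = lam.restrict S := by
  have : g =ᵐ[lam.restrict S] id := by
    filter_upwards [ae_restrict_mem hS] with y hy
    exact hg.off y (fun h => disjoint_left.1 hd hy h)
  rw [Measure.map_congr this, Measure.map_id]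

theorem main_chn {d : ℕ} {V : Set (Euc d)} {r : ℝ} {x0 : Euc d} {ρ0 : ℝ} (hρ0 : ρ0 ≤ r)
    {U : Set (Euc d)} (h : Chn V r (Metric.ball x0 ρ0) U) :
    ∀ (μ ν : Measure (Euc d)) [IsFiniteMeasure μ] [IsFiniteMeasure ν], μ ≪ volume → ν ≪ volume →
      ∀ η : ℝ, 0 < η → ∃ g, Rz U g ∧ ∃ π : Measure (Euc d × Euc d), IsFiniteMeasure π ∧
        π.map Prod.fst ≤ (μ.restrict U).map g ∧ π.map Prod.snd ≤ ν.restrict U ∧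
        π {p | ENNReal.ofReal (2 * r) < edist p.1 p.2} = 0 ∧
        min (μ.real U) (ν.real U) ≤ π.real univ + η := by
  induction h with
  | base =>
    intro μ ν _ _ hμ hν η hη
    obtain ⟨π, h1, h2, h3, h4, h5⟩ := exists_prod_coupling hρ0 μ ν (measurableSet_ball (x := x0) (ε := ρ0))
      measurableSet_ball subset_rfl subset_rfl
    refine ⟨_, Rz.id _, π, h1, ?_, h3, h4, by rw [h5]; linarith⟩
    rwa [show (fun x : Euc d => x) = id from rfl, Measure.map_id]
  | step U' x ρ hU' h1 h2 h3 h4 ih =>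
    intro μ ν _ _ hμ hν η hη
    have hU'o : IsOpen U' := hU'.isOpen Metric.isOpen_ball
    have hUc : IsPreconnected (U' ∪ Metric.ball x ρ) :=
      (Chn.step U' x ρ hU' h1 h2 h3 h4).isPreconnected (convex_ball x0 ρ0).isPreconnected
    have hnull : volume (closure U' \ U') = 0 := hU'.closure_null (by
      have := (convex_ball x0 ρ0).addHaar_frontier (volume : Measure (Euc d))
      rwa [Metric.isOpen_ball.frontier_eq] at this)
    set B := Metric.ball x ρ with hB
    set U := U' ∪ B with hU
    set D := B \ closure U' with hD
    have hDo : IsOpen D := Metric.isOpen_ball.sdiff isClosed_closure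
    have hDU' : Disjoint D U' := by
      rw [disjoint_left]; exact fun y hy hy' => hy.2 (subset_closure hy')
    have hDU : D ⊆ U := sdiff_subset.trans subset_union_right
    have hUo : IsOpen U := hU'o.union Metric.isOpen_ball
    -- ν on U splits
    have hνsplit : ν.restrict U' + ν.restrict D = ν.restrict U := by
      rw [← Measure.restrict_union hDU'.symm hDo.measurableSet]
      refine Measure.restrict_congr_set ?_
      have hz : ∀ᵐ y ∂ν, y ∉ closure U' \ U' := by
        rw [ae_iff]; simp only [not_not]; exact hν hnull
      filter_upwards [hz] with y hy
      apply propext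
      constructor
      · rintro (h | h)
        · exact Or.inl h
        · exact hDU h
      · rintro (h | h)
        · exact Or.inl h
        · by_cases h' : y ∈ closure U'
          · left; by_contra h''; exact hy ⟨h', h''⟩
          · exact Or.inr ⟨h, h'⟩
    have hνreal : ν.real U = ν.real U' + ν.real D := by
      have := congrArg (fun κ : Measure (Euc d) => κ.real univ) hνsplit
      simp only [measureReal_restrict_apply_univ] at this
      rw [← this, measureReal_add_apply]
      simp [measureReal_restrict_apply_univ]
    -- the transport step
    obtain ⟨g, hg, eD, eU⟩ : ∃ g, Rz U g ∧
      min (ν.real D) (μ.real U) - η / 3 ≤ μ.real (U ∩ g ⁻¹' D) ∧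
      μ.real U - min (ν.real D) (μ.real U) - η / 3 ≤ μ.real (U ∩ g ⁻¹' U') := by
      rcases eq_empty_or_nonempty D with hDe | hDn
      · obtain ⟨g, hg, e⟩ := squeeze (Metric.isOpen_ball (x := x) (ε := ρ)) (convex_ball x ρ) hU'o
          (by rwa [inter_comm]) μ (show 0 < η / 3 by positivity)
        refine ⟨g, hg.mono subset_union_right, ?_, ?_⟩
        · rw [hDe]
          simp
          positivity
        · rw [hDe, measureReal_empty, min_eq_left measureReal_nonneg]
          have hsub : U ⊆ (U ∩ g ⁻¹' U') ∪ (B \ g ⁻¹' U') := by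
            intro y hy
            by_cases hyU : g y ∈ U'
            · exact Or.inl ⟨hy, hyU⟩
            · right
              refine ⟨?_, hyU⟩
              by_contra hyb
              rw [hg.off y hyb] at hyU
              exact hy.elim hyU hyb
          have := (measureReal_mono (μ := μ) hsub).trans (measureReal_union_le _ _)
          linarith
      · exact split_step hU'o hUc h4 hDn μ hμ measureReal_nonneg (by positivity)
    set lam := (μ.restrict U).map g with hlam
    have hlac : lam ≪ volume :=
      hg.map_ac (Measure.restrict_le_self.absolutelyContinuous.trans hμ)
    have hlapp : ∀ S : Set (Euc d), MeasurableSet S → lam.real S = μ.real (U ∩ g ⁻¹' S) := by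
      intro S hS
      rw [hlam, map_measureReal_apply hg.meas hS, measureReal_restrict_apply (hg.meas hS), inter_comm]
    rw [← hlapp _ hDo.measurableSet] at eD
    rw [← hlapp _ hU'o.measurableSet] at eU
    obtain ⟨g', hg', π', f1, f2, f3, f4, f5⟩ := ih lam ν hlac hν (η / 3) (by positivity)
    obtain ⟨π'', k1, k2, k3, k4, k5⟩ := exists_prod_coupling h2 lam ν hDo.measurableSet
      hDo.measurableSet sdiff_subset sdiff_subset
    refine ⟨_, (hg'.mono subset_union_left).comp hg, π' + π'', inferInstance, ?_, ?_, ?_, ?_⟩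
    · have hcomp : (μ.restrict U).map (fun y => g' (g y)) = lam.map g' := by
        rw [hlam, Measure.map_map hg'.meas hg.meas]; rfl
      rw [hcomp, Measure.map_add _ _ measurable_fst]
      calc _ ≤ (lam.restrict U').map g' + lam.restrict D := add_le_add f2 k2
        _ = (lam.restrict U' + lam.restrict D).map g' := by
          rw [Measure.map_add _ _ hg'.meas, map_restrict_self hg' hDo.measurableSet hDU']
        _ = (lam.restrict (U' ∪ D)).map g' := by
          rw [Measure.restrict_union hDU'.symm hDo.measurableSet]
        _ ≤ _ := Measure.map_mono Measure.restrict_le_self hg'.meas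
    · rw [Measure.map_add _ _ measurable_snd, ← hνsplit]
      exact add_le_add f3 k3
    · rw [Measure.add_apply, f4, k4, add_zero]
    · rw [measureReal_add_apply, k5, hνreal]
      have hn1 : 0 ≤ ν.real D := measureReal_nonneg
      have hn2 : 0 ≤ μ.real U := measureReal_nonneg
      have hn3 : 0 ≤ ν.real U' := measureReal_nonneg
      generalize μ.real U = M at *
      generalize ν.real D = m at *
      generalize ν.real U' = a at *
      generalize lam.real D = dd at *
      generalize lam.real U' = d' at *
      generalize π'.real univ = w at *
      simp only [min_def] at *
      split_ifs at * <;> linarith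


theorem msupport_compl_null {d : ℕ} (μ : Measure (Euc d)) : μ (msupport μ)ᶜ = 0 := by
  refine measure_null_of_locally_null _ fun x hx => ?_
  have hx' : ¬ ∀ U : Set (Euc d), IsOpen U → x ∈ U → 0 < μ U := hx
  push Not at hx'
  obtain ⟨U, hU, hxU, h0⟩ := hx'
  exact ⟨U, mem_nhdsWithin_of_mem_nhds (hU.mem_nhds hxU), le_antisymm h0 (zero_le)⟩

theorem msupport_subset_of_null {d : ℕ} {μ : Measure (Euc d)} {K : Set (Euc d)} (hK : IsClosed K)
    (h : μ Kᶜ = 0) : msupport μ ⊆ K := by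
  intro x hx
  by_contra hxK
  exact (ne_of_gt (hx Kᶜ hK.isOpen_compl hxK)) h

theorem IsFlow.isCurve {d : ℕ} {u : Euc d → ℝ → Euc d} {Φ : ℝ → Euc d → Euc d}
    (hu : IsRegularField u) (hΦ : IsFlow u Φ) {T : ℝ} (hT : 0 < T) (x : Euc d) :
    IsCurve u T (fun t => Φ t x) ∧ Φ 0 x = x := by
  have h0 : Φ 0 x = x := by rw [hΦ x 0]; simp
  refine ⟨⟨?_, fun t _ => by
    show Φ t x = Φ 0 x + _
    rw [h0]; exact hΦ x t⟩, h0⟩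
  obtain ⟨⟨C, hC⟩, -, hm⟩ := hu
  set f : ℝ → Euc d := fun s => u (Φ s x) s with hf
  set A : Set ℝ := {t | t ∈ Icc 0 T ∧ IntervalIntegrable f volume 0 t} with hA
  have hA0 : (0:ℝ) ∈ A := ⟨⟨le_rfl, hT.le⟩, IntervalIntegrable.refl⟩
  have hAb : BddAbove A := ⟨T, fun t ht => ht.1.2⟩
  set t0 := sSup A with ht0
  have hlow : ∀ t, t < t0 → IntegrableOn f (Ioc 0 t) := by
    intro t ht
    obtain ⟨t', ht', htt'⟩ := exists_lt_of_lt_csSup ⟨0, hA0⟩ ht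
    have := (intervalIntegrable_iff_integrableOn_Ioc_of_le ht'.1.1).1 ht'.2
    exact this.mono_set (Ioc_subset_Ioc_right htt'.le)
  have hhigh : ∀ t ∈ Ioc t0 T, f t = u x t := by
    intro t ht
    have h00 : 0 ≤ t0 := le_csSup hAb hA0
    have hn : ¬ IntervalIntegrable f volume 0 t := by
      intro hi
      exact absurd (le_csSup hAb (show t ∈ A from ⟨⟨h00.trans ht.1.le, ht.2⟩, hi⟩)) (not_le.2 ht.1)
    have : Φ t x = x := by
      rw [hΦ x t, intervalIntegral.integral_undef hn, add_zero]
    simp only [hf, this]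
  obtain ⟨w, -, hw, hwt⟩ := exists_seq_strictMono_tendsto t0
  have hm1 : AEStronglyMeasurable f (volume.restrict (⋃ n, Ioc 0 (w n))) :=
    aestronglyMeasurable_iUnion_iff.2 fun n => (hlow _ (hw n)).aestronglyMeasurable
  have hm2 : AEStronglyMeasurable f (volume.restrict {t0}) := by
    rw [Measure.restrict_eq_zero.2 (by simp)]
    exact aestronglyMeasurable_zero_measure _
  have hm3 : AEStronglyMeasurable f (volume.restrict (Ioc t0 T)) := by
    refine (hm x).aestronglyMeasurable.congr ?_
    filter_upwards [ae_restrict_mem measurableSet_Ioc] with t ht using (hhigh t ht).symm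
  have hm4 : AEStronglyMeasurable f (volume.restrict (Ioc 0 T)) := by
    refine (aestronglyMeasurable_union_iff.2 ⟨aestronglyMeasurable_union_iff.2 ⟨hm1, hm2⟩, hm3⟩).mono_set ?_
    intro t ht
    rcases lt_trichotomy t t0 with h | h | h
    · obtain ⟨n, hn⟩ := (hwt.eventually (lt_mem_nhds h)).exists
      exact Or.inl (Or.inl (mem_iUnion.2 ⟨n, ht.1, hn.le⟩))
    · exact Or.inl (Or.inr h)
    · exact Or.inr ⟨h, ht.2⟩
  rw [intervalIntegrable_iff_integrableOn_Ioc_of_le hT.le]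
  exact Integrable.of_bound hm4 C (Filter.Eventually.of_forall fun s => hC _ _)

theorem IsCurve.mem_of {d : ℕ} {u : Euc d → ℝ → Euc d} {T : ℝ} (hT : 0 ≤ T) {γ : ℝ → Euc d}
    (h : IsCurve u T γ) {K : Set (Euc d)} (hK : IsClosed K) (hu : ∀ x t, x ∉ K → u x t = 0)
    (h0 : γ 0 ∈ K) : ∀ t ∈ Icc 0 T, γ t ∈ K := by
  intro b hb
  by_contra hbK
  have hsub : Icc 0 b ⊆ Icc 0 T := Icc_subset_Icc_right hb.2
  have hc := (h.continuousOn hT).mono hsub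
  have hcl := hc.preimage_isClosed_of_isClosed isClosed_Icc hK
  have hcp : IsCompact (Icc 0 b ∩ γ ⁻¹' K) := isCompact_Icc.of_isClosed_subset hcl inter_subset_left
  obtain ⟨a, ha, hamax⟩ := hcp.exists_isGreatest ⟨0, ⟨le_rfl, hb.1⟩, h0⟩
  have haK : γ a ∈ K := ha.2
  have hz : ∀ s ∈ Ioc a b, u (γ s) s = 0 := by
    intro s hs
    apply hu
    intro hsK
    exact absurd (hamax ⟨⟨ha.1.1.trans hs.1.le, hs.2⟩, hsK⟩) (not_le.2 hs.1)
  have hz' : ∫ s in a..b, u (γ s) s = 0 := by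
    rw [intervalIntegral.integral_of_le ha.1.2]
    exact setIntegral_eq_zero_of_forall_eq_zero hz
  have hi : ∀ c ∈ Icc 0 T, IntervalIntegrable (fun s => u (γ s) s) volume 0 c := by
    intro c hc
    refine h.1.mono_set ?_
    rw [uIcc_of_le hc.1, uIcc_of_le hT]
    exact Icc_subset_Icc_right hc.2
  have e := intervalIntegral.integral_add_adjacent_intervals (hi a (hsub ha.1))
    ((hi a (hsub ha.1)).symm.trans (hi b hb))
  rw [hz', add_zero] at e
  have : γ b = γ a := by rw [h.2 b hb, h.2 a (hsub ha.1), e]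
  exact hbK (this ▸ haK)

theorem W1_le {d : ℕ} {a b : Measure (Euc d)} [IsProbabilityMeasure a] [IsProbabilityMeasure b]
    {U : Set (Euc d)} {D r η : ℝ}
    (hD : ∀ x ∈ U, ∀ y ∈ U, edist x y ≤ ENNReal.ofReal D) (ha : a Uᶜ = 0) (hb : b Uᶜ = 0)
    {π : Measure (Euc d × Euc d)} [IsFiniteMeasure π] (h1 : π.map Prod.fst ≤ a)
    (h2 : π.map Prod.snd ≤ b) (hfar : π {p | ENNReal.ofReal (2 * r) < edist p.1 p.2} = 0)
    (hmass : 1 ≤ π.real univ + η) :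
    W1 a b ≤ ENNReal.ofReal (2 * r) + ENNReal.ofReal D * ENNReal.ofReal η := by
  set ρ1 := a - π.map Prod.fst with hρ1
  set ρ2 := b - π.map Prod.snd with hρ2
  have s1 : ρ1 + π.map Prod.fst = a := Measure.sub_add_cancel_of_le h1
  have s2 : ρ2 + π.map Prod.snd = b := Measure.sub_add_cancel_of_le h2
  have hπ1 : π.map Prod.fst univ = π univ := by
    rw [Measure.map_apply measurable_fst MeasurableSet.univ, preimage_univ]
  have hπ2 : π.map Prod.snd univ = π univ := by
    rw [Measure.map_apply measurable_snd MeasurableSet.univ, preimage_univ]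
  have m1 : ρ1 univ + π univ = 1 := by
    rw [← hπ1, ← Measure.add_apply, s1, measure_univ]
  have m2 : ρ2 univ + π univ = 1 := by
    rw [← hπ2, ← Measure.add_apply, s2, measure_univ]
  set s := ρ1 univ with hs
  have hfin : π univ ≠ ⊤ := measure_ne_top _ _
  have hs2 : ρ2 univ = s := (ENNReal.add_left_inj hfin).1 (m2.trans m1.symm)
  have hπle : π univ ≤ 1 := m1 ▸ le_add_self
  have hsle1 : s ≤ 1 := m1 ▸ le_self_add
  have hsfin : s ≠ ⊤ := ne_top_of_le_ne_top ENNReal.one_ne_top hsle1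
  have hsη : s ≤ ENNReal.ofReal η := by
    have e : s.toReal + π.real univ = 1 := by
      rw [Measure.real, ← ENNReal.toReal_add hsfin hfin, m1]; simp
    rw [← ENNReal.ofReal_toReal hsfin]
    exact ENNReal.ofReal_le_ofReal (by linarith)
  have hρ1a : ρ1 ≤ a := Measure.sub_le
  have hρ2b : ρ2 ≤ b := Measure.sub_le
  haveI : IsFiniteMeasure ρ1 := ⟨by rw [← hs]; exact lt_top_iff_ne_top.2 hsfin⟩
  haveI : IsFiniteMeasure ρ2 := ⟨by rw [hs2]; exact lt_top_iff_ne_top.2 hsfin⟩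
  have hc : ∀ ρ : Measure (Euc d), ρ univ = s → s⁻¹ • (s • ρ) = ρ := by
    intro ρ hρ
    by_cases h0 : s = 0
    · rw [h0, Measure.measure_univ_eq_zero] at hρ
      simp [hρ]
    · rw [smul_smul, ENNReal.inv_mul_cancel h0 hsfin, one_smul]
  set P := π + s⁻¹ • ρ1.prod ρ2 with hP
  have f1 : P.map Prod.fst = a := by
    rw [hP, Measure.map_add _ _ measurable_fst, Measure.map_smul, Measure.map_fst_prod, hs2, hc ρ1 hs.symm,
      add_comm, s1]
  have f2 : P.map Prod.snd = b := by
    rw [hP, Measure.map_add _ _ measurable_snd, Measure.map_smul, Measure.map_snd_prod, ← hs, hc ρ2 hs2,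
      add_comm, s2]
  refine (iInf_le_of_le P (iInf_le_of_le f1 (iInf_le _ f2))).trans ?_
  rw [hP, lintegral_add_measure, lintegral_smul_measure]
  refine add_le_add ?_ ?_
  · have hae : ∀ᵐ p ∂π, edist p.1 p.2 ≤ ENNReal.ofReal (2 * r) := by
      rw [ae_iff]
      simpa only [not_le] using hfar
    calc ∫⁻ q, edist q.1 q.2 ∂π ≤ ∫⁻ q, ENNReal.ofReal (2 * r) ∂π := lintegral_mono_ae hae
      _ = ENNReal.ofReal (2 * r) * π univ := lintegral_const _
      _ ≤ ENNReal.ofReal (2 * r) * 1 := by gcongr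
      _ = _ := mul_one _
  · have hae : ∀ᵐ p ∂(ρ1.prod ρ2), edist p.1 p.2 ≤ ENNReal.ofReal D := by
      have q1 : ∀ᵐ x ∂ρ1, x ∈ U := by
        rw [ae_iff]; exact le_antisymm ((hρ1a _).trans ha.le) zero_le
      have q2 : ∀ᵐ x ∂ρ2, x ∈ U := by
        rw [ae_iff]; exact le_antisymm ((hρ2b _).trans hb.le) zero_le
      filter_upwards [Measure.quasiMeasurePreserving_fst.ae q1,
        Measure.quasiMeasurePreserving_snd.ae q2] with p hp1 hp2
      exact hD _ hp1 _ hp2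
    have hu : (ρ1.prod ρ2) univ = s * s := by
      rw [← univ_prod_univ, Measure.prod_prod, ← hs, hs2]
    have hss : s⁻¹ * (s * s) ≤ s := by
      by_cases h0 : s = 0
      · simp [h0]
      · rw [← mul_assoc, ENNReal.inv_mul_cancel h0 hsfin, one_mul]
    calc s⁻¹ • ∫⁻ q, edist q.1 q.2 ∂(ρ1.prod ρ2)
        ≤ s⁻¹ • ∫⁻ q, ENNReal.ofReal D ∂(ρ1.prod ρ2) := by
          rw [smul_eq_mul, smul_eq_mul]
          exact mul_le_mul_right (lintegral_mono_ae hae) _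
      _ = ENNReal.ofReal D * (s⁻¹ * (s * s)) := by
          rw [lintegral_const, hu, smul_eq_mul]; ring
      _ ≤ _ := by gcongr; exact hss.trans hsη

/-- Approximate controllability inside the control region: if both measures are
supported in `ω`, one can approximately steer one to the other in any time `T`,
keeping the support of the solution inside `ω`. -/
theorem approx_controllability_inside
    (d : ℕ) (ω : Set (Euc d)) (hω : ω.Nonempty) (hωo : IsOpen ω) (hωc : IsConnected ω)
    (μ0 μ1 : Measure (Euc d)) [IsProbabilityMeasure μ0] [IsProbabilityMeasure μ1]
    (h0K : IsCompact (msupport μ0)) (h1K : IsCompact (msupport μ1))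
    (h0ac : μ0 ≪ volume) (h1ac : μ1 ≪ volume)
    (h0ω : msupport μ0 ⊆ ω) (h1ω : msupport μ1 ⊆ ω) :
    ∀ T : ℝ, 0 < T → ∀ ε : ℝ, 0 < ε →
      ∃ u : Euc d → ℝ → Euc d,
        IsRegularField u ∧
        (∀ x t, x ∉ ω → u x t = 0) ∧
        ∀ Φ : ℝ → Euc d → Euc d, IsFlow u Φ →
          W1 (μ0.map (Φ T)) μ1 ≤ ENNReal.ofReal ε ∧
          ∀ t ∈ Icc (0:ℝ) T, msupport (μ0.map (Φ t)) ⊆ ω := by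
  intro T hT ε hε
  obtain ⟨x0, hx0⟩ := hω
  obtain ⟨R, hR, hRω⟩ := Metric.isOpen_iff.1 hωo x0 hx0
  set r := ε / 4 with hr
  have hrpos : 0 < r := by positivity
  set ρ0 := min (R / 2) r with hρ0
  have hρ0pos : 0 < ρ0 := lt_min (by positivity) hrpos
  have hcb : Metric.closedBall x0 ρ0 ⊆ ω :=
    (Metric.closedBall_subset_ball ((min_le_left _ _).trans_lt (by linarith))).trans hRω
  obtain ⟨U, hU, hKU⟩ := exists_chn hωo hωc.isPreconnected hrpos
    (Metric.isOpen_ball (x := x0) (ε := ρ0)) ⟨x0, hx0, Metric.mem_ball_self hρ0pos⟩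
    (h0K.union h1K) (union_subset h0ω h1ω)
  have hUo : IsOpen U := hU.isOpen Metric.isOpen_ball
  have hclU : closure U ⊆ ω := hU.closure_subset (Metric.closure_ball_subset_closedBall.trans hcb)
  have hUb : Bornology.IsBounded U := hU.isBounded Metric.isBounded_ball
  have n0 : μ0 Uᶜ = 0 := measure_mono_null
    (compl_subset_compl.2 (subset_union_left.trans hKU)) (msupport_compl_null μ0)
  have n1 : μ1 Uᶜ = 0 := measure_mono_null
    (compl_subset_compl.2 (subset_union_right.trans hKU)) (msupport_compl_null μ1)
  have r0 : μ0.restrict U = μ0 := Measure.restrict_eq_self_of_ae_mem (by rw [ae_iff]; exact n0)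
  have r1 : μ1.restrict U = μ1 := Measure.restrict_eq_self_of_ae_mem (by rw [ae_iff]; exact n1)
  set D := Metric.diam U with hD
  have hD0 : 0 ≤ D := Metric.diam_nonneg
  have hDist : ∀ x ∈ U, ∀ y ∈ U, edist x y ≤ ENNReal.ofReal D := by
    intro x hx y hy
    rw [edist_dist]
    exact ENNReal.ofReal_le_ofReal (Metric.dist_le_diam_of_mem hUb hx hy)
  set η := ε / (2 * (D + 1)) with hη
  have hηpos : 0 < η := by positivity
  obtain ⟨g, hg, π, hπf, hπ1, hπ2, hfar, hmass⟩ :=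
    main_chn (min_le_right _ _) hU μ0 μ1 h0ac h1ac η hηpos
  rw [r0] at hπ1
  rw [r1] at hπ2
  have m0 : μ0.real U = 1 := by
    rw [← measureReal_restrict_apply_univ, r0]; simp
  have m1 : μ1.real U = 1 := by
    rw [← measureReal_restrict_apply_univ, r1]; simp
  rw [m0, m1, min_self] at hmass
  obtain ⟨u, hu, hoff, hend⟩ := hg.real T hT
  refine ⟨u, hu, fun x t hx => hoff x t fun h => hx (hclU (subset_closure h)), ?_⟩
  intro Φ hΦ
  constructor
  · have hΦT : Φ T = g := by
      funext x
      obtain ⟨hc, h0⟩ := hΦ.isCurve hu hT x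
      have := hend _ hc
      simpa only [h0] using this
    rw [hΦT]
    haveI : IsProbabilityMeasure (μ0.map g) := Measure.isProbabilityMeasure_map hg.meas.aemeasurable
    have na : μ0.map g Uᶜ = 0 := by
      rw [Measure.map_apply hg.meas hUo.measurableSet.compl]
      exact measure_mono_null (fun x hx hxU => hx (hg.maps x hxU)) n0
    refine (W1_le hDist na n1 hπ1 hπ2 hfar hmass).trans ?_
    rw [← ENNReal.ofReal_mul hD0, ← ENNReal.ofReal_add (by positivity) (by positivity)]
    refine ENNReal.ofReal_le_ofReal ?_
    have : D * η ≤ ε / 2 := by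
      rw [hη, ← mul_div_assoc, div_le_div_iff₀ (by positivity) (by norm_num)]
      nlinarith
    rw [hr]; linarith
  · intro t ht
    by_cases hm : AEMeasurable (Φ t) μ0
    · refine (msupport_subset_of_null isClosed_closure ?_).trans hclU
      rw [Measure.map_apply_of_aemeasurable hm isClosed_closure.measurableSet.compl]
      refine measure_mono_null ?_ n0
      intro x hx hxU
      obtain ⟨hc, h0⟩ := hΦ.isCurve hu hT x
      exact hx (hc.mem_of hT.le isClosed_closure (fun y s hy => hoff y s fun h => hy (subset_closure h))
        (by simpa only [h0] using subset_closure hxU) t ht)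
    · rw [Measure.map_of_not_aemeasurable hm]
      exact (msupport_subset_of_null isClosed_empty (by simp)).trans (empty_subset _)
end
end

section
/- Let ω ⊂ ℝ^d be a nonempty open connected set, v : ℝ^d → ℝ^d a Lipschitz, uniformly bounded vector field, and μ⁰ a compactly supported probability measure on ℝ^d with supp(μ⁰) ⊂ ω. Let S be a nonempty open convex set strictly included in ω \ supp(μ⁰), and let δ > 0. Then there exists a pair (𝟙_ω u, μ) consisting of a Borel vector field 𝟙_ω u : ℝ^d × ℝ⁺ → ℝ^d vanishing outside ω and a time-evolving compactly supported measure μ, such that (μ, v + 𝟙_ω u) is a weak solution of ∂_t μ + ∇·((v + 𝟙_ω u) μ) = 0 on [0, δ] with μ(0) = μ⁰ and supp(μ(δ)) ⊂ S. -/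
open MeasureTheory Set
open scoped ENNReal NNReal

noncomputable section

/-- `(μ, w)` is a weak solution of the continuity equation
`∂ₜ μ + ∇·(w μ) = 0` on the time interval `[0, T]`. -/
def IsWeakSolutionOn {d : ℕ} (T : ℝ) (w : Euc d → ℝ → Euc d)
    (μ : ℝ → Measure (Euc d)) : Prop :=
  (∫⁻ t in Icc (0:ℝ) T, ∫⁻ x, (‖w x t‖₊ : ℝ≥0∞) ∂(μ t)) < ⊤ ∧
  ∀ ψ : Euc d → ℝ, ContDiff ℝ (⊤ : ℕ∞) ψ → HasCompactSupport ψ →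
    ∀ t ∈ Icc (0:ℝ) T,
      (∫ x, ψ x ∂(μ t)) - (∫ x, ψ x ∂(μ 0))
        = ∫ s in Icc (0:ℝ) t, (∫ x, (inner ℝ (gradient ψ x) (w x s) : ℝ) ∂(μ s))


/-- A family of controlled trajectories starting from points of `s`, defined on a measurable
superset `A` of `s`, staying in `ω` and bounded, reaching `p` at time `δ`. -/
def GoodFlow {d : ℕ} (ω : Set (Euc d)) (p : Euc d) (δ : ℝ) (s : Set (Euc d)) : Prop :=
  ∃ (A : Set (Euc d)) (G G' : Euc d → ℝ → Euc d) (C : ℝ), MeasurableSet A ∧ s ⊆ A ∧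
    Measurable (fun q : Euc d × ℝ => G q.1 q.2) ∧
    Measurable (fun q : Euc d × ℝ => G' q.1 q.2) ∧
    (∀ x ∈ A, ∀ t ∈ Icc (0:ℝ) δ, ‖G x t‖ ≤ C ∧ ‖G' x t‖ ≤ C ∧ G x t ∈ ω ∧
      HasDerivAt (G x) (G' x t) t) ∧
    (∀ x ∈ A, G x 0 = x ∧ G x δ = p)

lemma goodFlow_union {d : ℕ} {ω : Set (Euc d)} {p : Euc d} {δ : ℝ} {s s' : Set (Euc d)}
    (h : GoodFlow ω p δ s) (h' : GoodFlow ω p δ s') : GoodFlow ω p δ (s ∪ s') := by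
  classical
  obtain ⟨A, G, G', C, hA, hs, hG, hG', h1, h2⟩ := h
  obtain ⟨B, H, H', D, hB, hs', hH, hH', h1', h2'⟩ := h'
  refine ⟨A ∪ B, fun x t => if x ∈ A then G x t else H x t,
    fun x t => if x ∈ A then G' x t else H' x t, max C D, hA.union hB,
    union_subset_union hs hs', ?_, ?_, ?_, ?_⟩
  · exact Measurable.ite (measurable_fst hA) hG hH
  · exact Measurable.ite (measurable_fst hA) hG' hH'
  · intro x hx t ht
    by_cases hxA : x ∈ A
    · simp only [hxA, if_true]
      obtain ⟨a, b, c, e⟩ := h1 x hxA t ht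
      exact ⟨a.trans (le_max_left _ _), b.trans (le_max_left _ _), c, e⟩
    · have hxB : x ∈ B := hx.resolve_left hxA
      simp only [hxA, if_false]
      obtain ⟨a, b, c, e⟩ := h1' x hxB t ht
      exact ⟨a.trans (le_max_right _ _), b.trans (le_max_right _ _), c, e⟩
  · intro x hx
    by_cases hxA : x ∈ A
    · simpa only [hxA, if_true] using h2 x hxA
    · have hxB : x ∈ B := hx.resolve_left hxA
      simpa only [hxA, if_false] using h2' x hxB

lemma goodFlow_local {d : ℕ} {ω : Set (Euc d)} (hωo : IsOpen ω) (hωc : IsConnected ω)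
    {p : Euc d} (hp : p ∈ ω) {δ : ℝ} (hδ : 0 < δ) {x₀ : Euc d} (hx₀ : x₀ ∈ ω) :
    ∃ r > 0, GoodFlow ω p δ (Metric.ball x₀ r) := by
  have hpc := hωo.isConnected_iff_isPathConnected.1 hωc
  obtain ⟨γ, hγ⟩ := hpc.joinedIn x₀ hx₀ p hp
  have hK : IsCompact (range γ) := isCompact_range γ.continuous
  have hKω : range γ ⊆ ω := by rintro _ ⟨t, rfl⟩; exact hγ t
  obtain ⟨ρ, hρ, hsub⟩ := hK.exists_thickening_subset_open hωo hKω
  set ε := ρ / 4 with hε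
  have hεpos : 0 < ε := by positivity
  set f : ℝ → Euc d := fun t => γ.extend (t / δ) with hf
  have hfuc : UniformContinuous f := by
    have h1 : UniformContinuous γ := CompactSpace.uniformContinuous_of_continuous γ.continuous
    have h2 : UniformContinuous (fun t : ℝ => t / δ) := by
      simpa [div_eq_inv_mul] using (uniformContinuous_const_smul (δ⁻¹) : UniformContinuous (fun t : ℝ => δ⁻¹ • t))
    exact h1.comp ((LipschitzWith.projIcc (zero_le_one)).uniformContinuous.comp h2)
  obtain ⟨g, hg, hgf⟩ := hfuc.exists_contDiff_dist_le hεpos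
  have hfr : ∀ t, f t ∈ range γ := fun t => ⟨_, rfl⟩
  have hf0 : f 0 = x₀ := by simp [hf]
  have hfδ : f δ = p := by simp [hf, hδ.ne']
  have hgd : Differentiable ℝ g := hg.differentiable (by simp)
  have hgdc : Continuous (deriv g) := hg.continuous_deriv (by simp)
  have hgc : Continuous g := hg.continuous
  set G : Euc d → ℝ → Euc d := fun x t => g t + (1 - t / δ) • (x - g 0) + (t / δ) • (p - g δ)
    with hG
  set G' : Euc d → ℝ → Euc d := fun x t =>
    deriv g t + (-(1 / δ)) • (x - g 0) + (1 / δ) • (p - g δ) with hG'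
  have hGc : Continuous (fun q : Euc d × ℝ => G q.1 q.2) := by
    simp only [hG]; fun_prop
  have hGc' : Continuous (fun q : Euc d × ℝ => G' q.1 q.2) := by
    simp only [hG']; fun_prop
  have hcomp : IsCompact (Metric.closedBall x₀ ε ×ˢ Icc (0:ℝ) δ) :=
    (isCompact_closedBall x₀ ε).prod isCompact_Icc
  obtain ⟨C, hC⟩ := hcomp.exists_bound_of_continuousOn hGc.continuousOn
  obtain ⟨C', hC'⟩ := hcomp.exists_bound_of_continuousOn hGc'.continuousOn
  refine ⟨ε, hεpos, Metric.ball x₀ ε, G, G', max C C', measurableSet_ball, Subset.rfl,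
    hGc.measurable, hGc'.measurable, ?_, ?_⟩
  · intro x hx t ht
    have hm : (x, t) ∈ Metric.closedBall x₀ ε ×ˢ Icc (0:ℝ) δ :=
      ⟨Metric.ball_subset_closedBall hx, ht⟩
    refine ⟨(hC _ hm).trans (le_max_left _ _), (hC' _ hm).trans (le_max_right _ _), ?_, ?_⟩
    · apply hsub
      rw [Metric.mem_thickening_iff]
      refine ⟨f t, hfr t, ?_⟩
      have a1 : ‖g t - f t‖ ≤ ε := by
        have := (hgf t).le; rwa [dist_eq_norm] at this
      have a2 : ‖x - g 0‖ ≤ 2 * ε := by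
        have h1 := (hgf 0).le
        rw [hf0] at h1
        have h2 : dist x x₀ < ε := hx
        rw [← dist_eq_norm]
        linarith [dist_triangle_right x (g 0) x₀]
      have a3 : ‖p - g δ‖ ≤ 2 * ε := by
        have h1 := (hgf δ).le
        rw [hfδ, dist_comm] at h1
        rw [← dist_eq_norm]; linarith
      have t0 : 0 ≤ t / δ := div_nonneg ht.1 hδ.le
      have t1 : t / δ ≤ 1 := (div_le_one hδ).2 ht.2
      have : G x t - f t = (g t - f t) + (1 - t / δ) • (x - g 0) + (t / δ) • (p - g δ) := by
        simp only [hG]; abel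
      rw [dist_eq_norm, this]
      calc _ ≤ ‖g t - f t‖ + ‖(1 - t / δ) • (x - g 0)‖ + ‖(t / δ) • (p - g δ)‖ := norm_add₃_le
        _ ≤ ε + (1 - t / δ) * (2 * ε) + (t / δ) * (2 * ε) := by
          rw [norm_smul, norm_smul, Real.norm_of_nonneg t0, Real.norm_of_nonneg (by linarith)]
          gcongr
        _ < ρ := by rw [hε]; ring_nf; linarith
    · have h1 : HasDerivAt (fun t : ℝ => 1 - t / δ) (-(1 / δ)) t := by
        simpa using ((hasDerivAt_id t).div_const δ).const_sub 1
      have h2 : HasDerivAt (fun t : ℝ => t / δ) (1 / δ) t := (hasDerivAt_id t).div_const δ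
      exact ((hgd t).hasDerivAt.add (h1.smul_const _)).add (h2.smul_const _)
  · intro x hx
    constructor
    · simp [hG]
    · simp [hG, hδ.ne']

lemma goodFlow_compact {d : ℕ} {ω : Set (Euc d)} (hωo : IsOpen ω) (hωc : IsConnected ω)
    {p : Euc d} (hp : p ∈ ω) {δ : ℝ} (hδ : 0 < δ) {K : Set (Euc d)} (hK : IsCompact K)
    (hKω : K ⊆ ω) : GoodFlow ω p δ K := by
  refine hK.induction_on (p := GoodFlow ω p δ) ?_ ?_ ?_ ?_
  · refine ⟨∅, fun _ _ => 0, fun _ _ => 0, 0, MeasurableSet.empty, Subset.rfl, measurable_const,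
      measurable_const, ?_, ?_⟩ <;> simp
  · rintro s t hst ⟨A, G, G', C, hA, hs, h⟩
    exact ⟨A, G, G', C, hA, hst.trans hs, h⟩
  · intro s t hs ht
    exact goodFlow_union hs ht
  · intro x hx
    obtain ⟨r, hr, h⟩ := goodFlow_local hωo hωc hp hδ (hKω hx)
    exact ⟨_, mem_nhdsWithin_of_mem_nhds (Metric.ball_mem_nhds x hr), h⟩

lemma msupport_eq {d : ℕ} (μ : Measure (Euc d)) : msupport μ = μ.support := by
  ext x
  rw [Measure.support_eq_forall_isOpen]
  simp only [msupport, mem_ofPred_eq]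
  constructor
  · intro h U hx hU; exact h U hU hx
  · intro h U hU hx; exact h U hx hU

lemma msupport_subset {d : ℕ} (μ : Measure (Euc d)) {F : Set (Euc d)} (hF : IsClosed F)
    (h : ∀ᵐ x ∂μ, x ∈ F) : msupport μ ⊆ F := by
  intro x hx
  by_contra hxF
  exact (hx Fᶜ hF.isOpen_compl hxF).ne' h

/-- The σ-algebra generated by `Φ` (position and time along trajectories). -/
abbrev sigmaGen {d : ℕ} (Φ : ℝ × Euc d → Euc d × ℝ) : MeasurableSpace (ℝ × Euc d) :=
  MeasurableSpace.comap Φ inferInstance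

/-- Steering the whole mass of a measure supported in `ω` into a nonempty open
convex set `S ⊂⊂ ω \ supp(μ⁰)` in time `δ`, with a Borel localized control, in
the sense of weak solutions of the continuity equation. -/
theorem concentrate_mass_borel
    (d : ℕ) (ω : Set (Euc d)) (hω : ω.Nonempty) (hωo : IsOpen ω) (hωc : IsConnected ω)
    (v : Euc d → Euc d) (hvL : ∃ K : ℝ≥0, LipschitzWith K v)
    (hvB : ∃ C : ℝ, ∀ x, ‖v x‖ ≤ C)
    (μ0 : Measure (Euc d)) [IsProbabilityMeasure μ0]
    (h0K : IsCompact (msupport μ0)) (h0ω : msupport μ0 ⊆ ω)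
    (S : Set (Euc d)) (hS : S.Nonempty) (hSo : IsOpen S) (hSconv : Convex ℝ S)
    (hScp : IsCompact (closure S)) (hScl : closure S ⊆ ω \ msupport μ0)
    (δ : ℝ) (hδ : 0 < δ) :
    ∃ (u : Euc d → ℝ → Euc d) (μ : ℝ → Measure (Euc d)),
      Measurable (fun q : Euc d × ℝ => u q.1 q.2) ∧
      (∀ x t, x ∉ ω → u x t = 0) ∧
      (∀ t ∈ Icc (0:ℝ) δ, IsCompact (msupport (μ t))) ∧
      IsWeakSolutionOn δ (fun x t => v x + u x t) μ ∧
      μ 0 = μ0 ∧ msupport (μ δ) ⊆ S := by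
  obtain ⟨K, hK⟩ := hvL
  obtain ⟨p, hpS⟩ := hS
  have hpω : p ∈ ω := (hScl (subset_closure hpS)).1
  obtain ⟨A, G, G', C, hAm, hsA, hG, hG', h1, h2⟩ :=
    goodFlow_compact hωo hωc hpω hδ h0K h0ω
  have hA : ∀ᵐ x ∂μ0, x ∈ A := by
    have : ∀ᵐ x ∂μ0, x ∈ μ0.support := Measure.support_mem_ae
    filter_upwards [this] with x hx
    exact hsA (by rwa [msupport_eq])
  have h0δ : (0:ℝ) ∈ Icc (0:ℝ) δ := ⟨le_rfl, hδ.le⟩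
  have hδδ : δ ∈ Icc (0:ℝ) δ := ⟨hδ.le, le_rfl⟩
  -- the space-time measure
  set I : Measure ℝ := volume.restrict (Icc (0:ℝ) δ) with hI
  set P : Measure (ℝ × Euc d) := I.prod μ0 with hP
  have hGs : Measurable (fun q : ℝ × Euc d => G q.2 q.1) := hG.comp measurable_swap
  have hGs' : Measurable (fun q : ℝ × Euc d => G' q.2 q.1) := hG'.comp measurable_swap
  set Φ : ℝ × Euc d → Euc d × ℝ := fun q => (G q.2 q.1, q.1) with hΦ
  have hΦm : Measurable Φ := hGs.prodMk measurable_fst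
  have hmle : sigmaGen Φ ≤ (inferInstance : MeasurableSpace (ℝ × Euc d)) := hΦm.comap_le
  have hΦm' : Measurable[sigmaGen Φ] Φ := comap_measurable Φ
  have hPae : ∀ᵐ q ∂P, q.1 ∈ Icc (0:ℝ) δ ∧ q.2 ∈ A := by
    have e1 : ∀ᵐ q ∂P, q.1 ∈ Icc (0:ℝ) δ :=
      Measure.quasiMeasurePreserving_fst.ae (ae_restrict_mem measurableSet_Icc)
    have e2 : ∀ᵐ q ∂P, q.2 ∈ A := Measure.quasiMeasurePreserving_snd.ae hA
    filter_upwards [e1, e2] with q a b using ⟨a, b⟩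
  have hG'int : Integrable (fun q : ℝ × Euc d => G' q.2 q.1) P := by
    refine Integrable.of_bound hGs'.aestronglyMeasurable C ?_
    filter_upwards [hPae] with q hq
    exact (h1 q.2 hq.2 q.1 hq.1).2.1
  obtain ⟨W, hWm, hW⟩ := StronglyMeasurable.exists_eq_measurable_comp
    (stronglyMeasurable_condExp (μ := P) (m := sigmaGen Φ) (f := fun q : ℝ × Euc d => G' q.2 q.1))
  have hWint : Integrable (W ∘ Φ) P := by rw [← hW]; exact integrable_condExp
  set u : Euc d → ℝ → Euc d := fun x t => ω.indicator (fun y => W (y, t) - v y) x with hu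
  have hum : Measurable (fun q : Euc d × ℝ => u q.1 q.2) := by
    have e : (fun q : Euc d × ℝ => u q.1 q.2)
        = (Prod.fst ⁻¹' ω).indicator (fun q : Euc d × ℝ => W q - v q.1) := by
      ext1 q
      by_cases hq : q.1 ∈ ω <;> simp [hu, indicator, hq]
    rw [e]
    exact (hWm.measurable.sub (hK.continuous.measurable.comp measurable_fst)).indicator
      (measurable_fst hωo.measurableSet)
  have hGt : ∀ t, Measurable (fun x => G x t) := fun t =>
    hG.comp (measurable_id.prodMk measurable_const)
  have hwm : Measurable (fun q : Euc d × ℝ => v q.1 + u q.1 q.2) :=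
    (hK.continuous.measurable.comp measurable_fst).add hum
  have hwt : ∀ t, Measurable (fun x => v x + u x t) := fun t =>
    hwm.comp (measurable_id.prodMk measurable_const)
  have hwG : ∀ x ∈ A, ∀ t ∈ Icc (0:ℝ) δ, v (G x t) + u (G x t) t = W (G x t, t) := by
    intro x hx t ht
    have := (h1 x hx t ht).2.2.1
    simp [hu, this]
  set μ : ℝ → Measure (Euc d) := fun t => μ0.map (fun x => G x t) with hμ
  have hμ0 : μ 0 = μ0 := by
    have : (fun x => G x 0) =ᵐ[μ0] id := by
      filter_upwards [hA] with x hx using (h2 x hx).1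
    simp only [hμ]
    rw [Measure.map_congr this, Measure.map_id]
  refine ⟨u, μ, hum, ?_, ?_, ⟨?_, ?_⟩, hμ0, ?_⟩
  · intro x t hx; simp [hu, hx]
  · intro t ht
    refine (isCompact_closedBall (0 : Euc d) C).of_isClosed_subset ?_ ?_
    · rw [msupport_eq]; exact Measure.isClosed_support
    · apply msupport_subset _ Metric.isClosed_closedBall
      refine (ae_map_iff (p := fun y => y ∈ Metric.closedBall (0 : Euc d) C)
        (hGt t).aemeasurable measurableSet_closedBall).2 ?_
      filter_upwards [hA] with x hx
      simpa using (h1 x hx t ht).1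
  · have e : ∫⁻ t in Icc (0:ℝ) δ, ∫⁻ x, (‖v x + u x t‖₊ : ℝ≥0∞) ∂(μ t)
        = ∫⁻ q, ‖(W ∘ Φ) q‖ₑ ∂P := by
      rw [hP, lintegral_prod _ (hWm.measurable.comp hΦm).enorm.aemeasurable]
      refine setLIntegral_congr_fun measurableSet_Icc ?_
      intro t ht
      simp only [hμ]
      rw [lintegral_map (hwt t).nnnorm.coe_nnreal_ennreal (hGt t)]
      refine lintegral_congr_ae ?_
      filter_upwards [hA] with x hx
      simp only [hwG x hx t ht]
      rfl
    rw [e]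
    exact hWint.2
  · intro ψ hψ hψc t ht
    have hgc : Continuous (gradient ψ) := by
      have : Continuous (fderiv ℝ ψ) := hψ.continuous_fderiv (by simp)
      exact (InnerProductSpace.toDual ℝ (Euc d)).symm.continuous.comp this
    obtain ⟨D, hD⟩ : ∃ D, ∀ x, ‖gradient ψ x‖ ≤ D := by
      have hc : HasCompactSupport (fderiv ℝ ψ) := hψc.fderiv ℝ
      obtain ⟨D, hD⟩ := (hψ.continuous_fderiv (by simp)).bounded_above_of_compact_support hc
      exact ⟨D, fun x => by simpa [gradient] using hD x⟩
    have hD0 : 0 ≤ D := (norm_nonneg _).trans (hD 0)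
    set h : ℝ × Euc d → Euc d := fun q => gradient ψ (G q.2 q.1) with hh
    have hhm : StronglyMeasurable[sigmaGen Φ] h := by
      have : Measurable[sigmaGen Φ] h := hgc.measurable.comp (measurable_fst.comp hΦm')
      exact this.stronglyMeasurable
    have hhm' : Measurable h := hgc.measurable.comp hGs
    set F : ℝ × Euc d → ℝ := fun q => inner ℝ (h q) (G' q.2 q.1) with hF
    have hFm : Measurable F := hhm'.inner hGs'
    have hFb : ∀ x ∈ A, ∀ s ∈ Icc (0:ℝ) δ, ‖F (s, x)‖ ≤ D * C := by
      intro x hx s hs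
      refine (norm_inner_le_norm _ _).trans ?_
      exact mul_le_mul (hD _) (h1 x hx s hs).2.1 (norm_nonneg _) hD0
    have hFint : Integrable F P := by
      refine Integrable.of_bound hFm.aestronglyMeasurable (D * C) ?_
      filter_upwards [hPae] with q hq
      exact hFb q.2 hq.2 q.1 hq.1
    have hpull : P[F | sigmaGen Φ] =ᵐ[P] fun q => inner ℝ (h q) ((W ∘ Φ) q) := by
      have := condExp_bilin_of_stronglyMeasurable_left (μ := P) (innerSL ℝ (E := Euc d)) hhm
        (g := fun q : ℝ × Euc d => G' q.2 q.1) hFint hG'int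
      rw [← hW]
      exact this
    have hRint : Integrable (fun q => (inner ℝ (h q) ((W ∘ Φ) q) : ℝ)) P :=
      integrable_condExp.congr hpull
    have hset : MeasurableSet[sigmaGen Φ] (Iic t ×ˢ (univ : Set (Euc d))) := by
      refine ⟨Prod.snd ⁻¹' Iic t, measurable_snd measurableSet_Iic, ?_⟩
      ext q; simp [hΦ]
    have hPr : P.restrict (Iic t ×ˢ (univ : Set (Euc d)))
        = (volume.restrict (Icc (0:ℝ) t)).prod μ0 := by
      rw [hP, ← Measure.prod_restrict, Measure.restrict_univ, hI,
        Measure.restrict_restrict measurableSet_Iic]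
      congr 2
      ext s
      simp only [mem_inter_iff, mem_Iic, mem_Icc]
      constructor
      · rintro ⟨a, b, c⟩; exact ⟨b, a⟩
      · rintro ⟨a, b⟩; exact ⟨b, a, b.trans ht.2⟩
    have key : ∫ q in Iic t ×ˢ (univ : Set (Euc d)), (inner ℝ (h q) ((W ∘ Φ) q) : ℝ) ∂P
        = ∫ q in Iic t ×ˢ (univ : Set (Euc d)), F q ∂P := by
      rw [← setIntegral_condExp hmle hFint hset]
      refine integral_congr_ae ?_
      exact Filter.EventuallyEq.symm (ae_restrict_of_ae hpull)
    have hFr := hFint.restrict (s := Iic t ×ˢ (univ : Set (Euc d)))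
    have hRr := hRint.restrict (s := Iic t ×ˢ (univ : Set (Euc d)))
    rw [hPr] at key hFr hRr
    rw [integral_prod _ hRr, integral_prod_symm _ hFr] at key
    have hsub : ∀ s ∈ Icc (0:ℝ) t, s ∈ Icc (0:ℝ) δ := fun s hs => ⟨hs.1, hs.2.trans ht.2⟩
    -- right-hand side
    have hR : ∫ s in Icc (0:ℝ) t, (∫ x, (inner ℝ (gradient ψ x) (v x + u x s) : ℝ) ∂(μ s))
        = ∫ s in Icc (0:ℝ) t, ∫ x, (inner ℝ (h (s, x)) ((W ∘ Φ) (s, x)) : ℝ) ∂μ0 := by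
      refine setIntegral_congr_fun measurableSet_Icc ?_
      intro s hs
      simp only [hμ]
      rw [integral_map (hGt s).aemeasurable
        (hgc.measurable.inner (hwt s)).aestronglyMeasurable]
      refine integral_congr_ae ?_
      filter_upwards [hA] with x hx
      simp only [hwG x hx s (hsub s hs)]
      rfl
    rw [hR, key]
    -- left-hand side
    have hψcont : Continuous ψ := hψ.continuous
    obtain ⟨B, hB⟩ := hψcont.bounded_above_of_compact_support hψc
    have hint : ∀ s, Integrable (fun x => ψ (G x s)) μ0 := fun s =>
      Integrable.of_bound (hψcont.measurable.comp (hGt s)).aestronglyMeasurable B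
        (ae_of_all _ fun x => hB _)
    simp only [hμ]
    rw [integral_map (hGt t).aemeasurable hψcont.aestronglyMeasurable,
      integral_map (hGt 0).aemeasurable hψcont.aestronglyMeasurable,
      ← integral_sub (hint t) (hint 0)]
    refine integral_congr_ae ?_
    filter_upwards [hA] with x hx
    rw [integral_Icc_eq_integral_Ioc, ← intervalIntegral.integral_of_le ht.1]
    symm
    have huIcc : uIcc 0 t = Icc 0 t := uIcc_of_le ht.1
    refine intervalIntegral.integral_eq_sub_of_hasDerivAt (f := fun s => ψ (G x s)) ?_ ?_
    · intro s hs
      rw [huIcc] at hs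
      have d1 := (h1 x hx s (hsub s hs)).2.2.2
      have d2 : HasGradientAt ψ (gradient ψ (G x s)) (G x s) :=
        ((hψ.differentiable (by simp)) (G x s)).hasGradientAt
      have := d2.hasFDerivAt.comp_hasDerivAt s d1
      simpa [hF, hh, Function.comp_def] using this
    · rw [intervalIntegrable_iff_integrableOn_Icc_of_le ht.1]
      refine Integrable.of_bound (hFm.comp (measurable_id.prodMk measurable_const)).aestronglyMeasurable
        (D * C) ?_
      filter_upwards [ae_restrict_mem measurableSet_Icc] with s hs
      exact hFb x hx s (hsub s hs)
  · refine Subset.trans (msupport_subset _ (isClosed_singleton (x := p)) ?_)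
      (singleton_subset_iff.2 hpS)
    simp only [hμ]
    refine (ae_map_iff (p := fun y => y ∈ ({p} : Set (Euc d)))
      (hGt δ).aemeasurable (measurableSet_singleton p)).2 ?_
    filter_upwards [hA] with x hx using (h2 x hx).2
end
end

section
/- Let ω ⊂ ℝ^d be a nonempty open connected set, v : ℝ^d → ℝ^d a Lipschitz, uniformly bounded vector field, and S a nonempty open convex set strictly included in ω. Let μ⁰, μ¹ be compactly supported probability measures on ℝ^d with supp(μ⁰) ⊂ S and supp(μ¹) ⊂ S, and let δ > 0. Then there exists a pair (𝟙_ω u, μ) consisting of a Borel vector field 𝟙_ω u : ℝ^d × ℝ⁺ → ℝ^d vanishing outside ω and a time-evolving compactly supported measure μ, such that (μ, v + 𝟙_ω u) is a weak solution of ∂_t μ + ∇·((v + 𝟙_ω u) μ) = 0 on [0, δ] with μ(0) = μ⁰, supp(μ(t)) ⊂ S for all t ∈ [0, δ], and μ(δ) = μ¹. -/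
open MeasureTheory Set
open scoped ENNReal NNReal

noncomputable section

/-- Homothety of centre `x0` and ratio `r`. -/
def homo {d : ℕ} (x0 : Euc d) (r : ℝ) (x : Euc d) : Euc d := x0 + r • (x - x0)

theorem homo_cont {d : ℕ} (x0 : Euc d) (r : ℝ) : Continuous (homo x0 r) := by
  unfold homo; fun_prop

theorem homo_mem {d : ℕ} {S : Set (Euc d)} (hS : Convex ℝ S) {x0 x : Euc d} (h0 : x0 ∈ S)
    (hx : x ∈ S) {r : ℝ} (hr0 : 0 ≤ r) (hr1 : r ≤ 1) : homo x0 r x ∈ S :=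
  hS.add_smul_sub_mem h0 hx ⟨hr0, hr1⟩

theorem isClosed_msupport {d : ℕ} (μ : Measure (Euc d)) : IsClosed (msupport μ) := by
  rw [← isOpen_compl_iff, isOpen_iff_forall_mem_open]
  intro x hx
  simp only [msupport, mem_compl_iff, mem_ofPred_eq, not_forall] at hx
  obtain ⟨U, hU, hxU, h⟩ := hx
  exact ⟨U, fun y hy hy' => h (hy' U hU hy), hU, hxU⟩

theorem msupport_ae {d : ℕ} (μ : Measure (Euc d)) : ∀ᵐ x ∂μ, x ∈ msupport μ := by
  change μ (msupport μ)ᶜ = 0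
  apply measure_null_of_locally_null
  intro x hx
  simp only [msupport, mem_compl_iff, mem_ofPred_eq, not_forall] at hx
  obtain ⟨U, hU, hxU, h⟩ := hx
  exact ⟨U, mem_nhdsWithin_of_mem_nhds (hU.mem_nhds hxU), by simpa using h⟩

theorem msupport_map {d : ℕ} (μ : Measure (Euc d)) (hK : IsCompact (msupport μ))
    {f : Euc d → Euc d} (hf : Continuous f) :
    msupport (μ.map f) ⊆ f '' msupport μ := by
  intro x hx
  by_contra hn
  have hc : IsOpen (f '' msupport μ)ᶜ := (hK.image hf).isClosed.isOpen_compl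
  have := hx _ hc hn
  rw [Measure.map_apply hf.measurable hc.measurableSet] at this
  refine this.ne' (measure_mono_null ?_ (msupport_ae μ))
  intro y hy hy'
  exact hy ⟨y, hy', rfl⟩

theorem path_ftc (F0 G0 F1 G1 : ℝ → ℝ) (h0 : ∀ r, HasDerivAt F0 (G0 r) r)
    (h1 : ∀ r, HasDerivAt F1 (G1 r) r) (c0 : Continuous G0) (c1 : Continuous G1)
    (heq : F0 0 = F1 0) (c : ℝ) (hc : 0 < c) (t : ℝ) (ht : 0 ≤ t) :
    (if t < c then F0 ((c - t) / c) else F1 ((t - c) / c)) - F0 1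
      = ∫ s in Icc (0:ℝ) t,
        (if s < c then -c⁻¹ * G0 ((c - s) / c) else c⁻¹ * G1 ((s - c) / c)) := by
  set Φ : ℝ → ℝ := fun t => F0 (max ((c - t) / c) 0) + F1 (max ((t - c) / c) 0) - F0 0 with hΦ
  have e1 : ∀ t, t ≤ c → Φ t = F0 ((c - t) / c) := by
    intro t ht
    have a1 : 0 ≤ (c - t) / c := div_nonneg (by linarith) hc.le
    have a2 : (t - c) / c ≤ 0 := div_nonpos_of_nonpos_of_nonneg (by linarith) hc.le
    simp [hΦ, max_eq_left a1, max_eq_right a2, heq]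
  have e2 : ∀ t, c ≤ t → Φ t = F1 ((t - c) / c) := by
    intro t ht
    have a1 : (c - t) / c ≤ 0 := div_nonpos_of_nonpos_of_nonneg (by linarith) hc.le
    have a2 : 0 ≤ (t - c) / c := div_nonneg (by linarith) hc.le
    simp [hΦ, max_eq_left a2, max_eq_right a1]
  have k0 : Continuous F0 := continuous_iff_continuousAt.2 fun r => (h0 r).continuousAt
  have k1 : Continuous F1 := continuous_iff_continuousAt.2 fun r => (h1 r).continuousAt
  have hcont : Continuous Φ := by
    simp only [hΦ]; fun_prop
  set D : ℝ → ℝ := fun s =>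
    (if s < c then -c⁻¹ * G0 ((c - s) / c) else c⁻¹ * G1 ((s - c) / c)) with hD
  have key : ∫ s in (0:ℝ)..t, D s = Φ t - Φ 0 := by
    refine integral_eq_of_hasDerivAt_off_countable_of_le Φ D ht (countable_singleton c)
      hcont.continuousOn ?_ ?_
    · rintro s ⟨-, hs⟩
      rcases lt_or_gt_of_ne (show s ≠ c from hs) with h | h
      · have hd : HasDerivAt (fun s : ℝ => (c - s) / c) (-1 / c) s :=
          ((hasDerivAt_id s).const_sub c).div_const c
        have := (h0 ((c - s) / c)).comp s hd
        have h3 : D s = G0 ((c - s) / c) * (-1 / c) := by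
          simp only [hD, if_pos h]; ring
        rw [h3]
        refine this.congr_of_eventuallyEq ?_
        filter_upwards [Iio_mem_nhds h] with y hy using e1 y (le_of_lt hy)
      · have hd : HasDerivAt (fun s : ℝ => (s - c) / c) (1 / c) s :=
          ((hasDerivAt_id s).sub_const c).div_const c
        have := (h1 ((s - c) / c)).comp s hd
        have h3 : D s = G1 ((s - c) / c) * (1 / c) := by
          simp only [hD, if_neg (not_lt.2 h.le)]; ring
        rw [h3]
        refine this.congr_of_eventuallyEq ?_
        filter_upwards [Ioi_mem_nhds h] with y hy using e2 y (le_of_lt hy)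
    · rw [intervalIntegrable_iff]
      have i0 : IntegrableOn (fun s => -c⁻¹ * G0 ((c - s) / c)) (uIoc 0 t) :=
        intervalIntegrable_iff.1 (Continuous.intervalIntegrable (by fun_prop) _ _)
      have i1 : IntegrableOn (fun s => c⁻¹ * G1 ((s - c) / c)) (uIoc 0 t) :=
        intervalIntegrable_iff.1 (Continuous.intervalIntegrable (by fun_prop) _ _)
      have := Integrable.piecewise (measurableSet_Iio (a := c)) (Integrable.integrableOn i0)
        (Integrable.integrableOn i1)
      refine this.congr (Filter.Eventually.of_forall fun s => ?_)
      simp [D, Set.piecewise]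
  rw [integral_Icc_eq_integral_Ioc, ← intervalIntegral.integral_of_le ht, key]
  rw [e1 0 hc.le]
  have : (c - 0) / c = 1 := by field_simp; simp
  rw [this]
  congr 1
  split_ifs with h
  · rw [e1 t h.le]
  · rw [e2 t (not_lt.1 h)]

theorem deriv_homo {d : ℕ} (x0 : Euc d) (μ : Measure (Euc d)) [IsProbabilityMeasure μ]
    (R : ℝ) (hR : ∀ᵐ x ∂μ, ‖x - x0‖ ≤ R) (ψ : Euc d → ℝ) (hψ : ContDiff ℝ (⊤ : ℕ∞) ψ)
    (hs : HasCompactSupport ψ) :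
    (∀ r, HasDerivAt (fun r => ∫ x, ψ (homo x0 r x) ∂μ)
      (∫ x, fderiv ℝ ψ (homo x0 r x) (x - x0) ∂μ) r) ∧
    Continuous (fun r => ∫ x, fderiv ℝ ψ (homo x0 r x) (x - x0) ∂μ) := by
  have hfc : Continuous (fderiv ℝ ψ) := hψ.continuous_fderiv (by simp)
  obtain ⟨M, hM⟩ := (hs.fderiv (𝕜 := ℝ)).exists_bound_of_continuous hfc
  obtain ⟨M', hM'⟩ := hs.exists_bound_of_continuous hψ.continuous
  have hM0 : 0 ≤ M := (norm_nonneg _).trans (hM 0)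
  have hbd : ∀ᵐ x ∂μ, ∀ r : ℝ, ‖fderiv ℝ ψ (homo x0 r x) (x - x0)‖ ≤ M * R := by
    filter_upwards [hR] with x hx r
    exact ((fderiv ℝ ψ (homo x0 r x)).le_opNorm _).trans
      (mul_le_mul (hM _) hx (norm_nonneg _) hM0)
  have hmeas : ∀ r : ℝ, Continuous (fun x => fderiv ℝ ψ (homo x0 r x) (x - x0)) := by
    intro r
    exact (hfc.comp (homo_cont x0 r)).clm_apply (by fun_prop)
  have hmψ : ∀ r : ℝ, Continuous (fun x => ψ (homo x0 r x)) := fun r =>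
    hψ.continuous.comp (homo_cont x0 r)
  constructor
  · intro r
    refine (hasDerivAt_integral_of_dominated_loc_of_deriv_le (s := univ)
      (F' := fun r x => fderiv ℝ ψ (homo x0 r x) (x - x0)) (bound := fun _ => M * R)
      Filter.univ_mem ?_ ?_ ?_ ?_ ?_ ?_).2
    · exact Filter.Eventually.of_forall fun r => (hmψ r).aestronglyMeasurable
    · exact Integrable.of_bound (hmψ r).aestronglyMeasurable M'
        (Filter.Eventually.of_forall fun x => hM' _)
    · exact (hmeas r).aestronglyMeasurable
    · filter_upwards [hbd] with x hx r _ using hx r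
    · exact integrable_const _
    · refine Filter.Eventually.of_forall fun x r _ => ?_
      have h1 : HasDerivAt (fun r : ℝ => homo x0 r x) (x - x0) r := by
        have := ((hasDerivAt_id r).smul_const (x - x0)).const_add x0
        simpa [homo] using this
      exact ((hψ.differentiable (by simp)) _).hasFDerivAt.comp_hasDerivAt r h1
  · refine continuous_of_dominated (bound := fun _ => M * R)
      (fun r => (hmeas r).aestronglyMeasurable) ?_ (integrable_const _) ?_
    · intro r
      filter_upwards [hbd] with x hx using hx r
    · refine Filter.Eventually.of_forall fun x => ?_
      exact (hfc.comp (by unfold homo; fun_prop)).clm_apply continuous_const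

theorem weak_integrand {d : ℕ} (x0 : Euc d) (μ : Measure (Euc d)) (r k : ℝ)
    (ψ : Euc d → ℝ) (hψ : ContDiff ℝ (⊤ : ℕ∞) ψ) (w : Euc d → Euc d)
    (hw : ∀ᵐ z ∂(μ.map (homo x0 r)), w z = k • (z - x0)) :
    ∫ z, (inner ℝ (gradient ψ z) (w z) : ℝ) ∂(μ.map (homo x0 r))
      = (k * r) * ∫ x, fderiv ℝ ψ (homo x0 r x) (x - x0) ∂μ := by
  have hfc : Continuous (fderiv ℝ ψ) := hψ.continuous_fderiv (by simp)
  have e : ∫ z, (inner ℝ (gradient ψ z) (w z) : ℝ) ∂(μ.map (homo x0 r))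
      = ∫ z, fderiv ℝ ψ z (k • (z - x0)) ∂(μ.map (homo x0 r)) := by
    refine integral_congr_ae ?_
    filter_upwards [hw] with z hz
    rw [hz, inner_gradient_left]
  rw [e, integral_map (homo_cont x0 r).measurable.aemeasurable
    (hfc.clm_apply (by fun_prop)).aestronglyMeasurable, ← integral_const_mul]
  refine integral_congr_ae (Filter.Eventually.of_forall fun x => ?_)
  have : k • (homo x0 r x - x0) = (k * r) • (x - x0) := by
    simp [homo, mul_smul]
  simp only [this, map_smul, smul_eq_mul]

/-- Exact steering between two measures supported in a nonempty open convex set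
`S ⊂⊂ ω`, in time `δ`, with a Borel localized control, keeping the support of
the solution inside `S`. -/
theorem exact_steering_in_convex_set
    (d : ℕ) (ω : Set (Euc d)) (hω : ω.Nonempty) (hωo : IsOpen ω) (hωc : IsConnected ω)
    (v : Euc d → Euc d) (hvL : ∃ K : ℝ≥0, LipschitzWith K v)
    (hvB : ∃ C : ℝ, ∀ x, ‖v x‖ ≤ C)
    (S : Set (Euc d)) (hS : S.Nonempty) (hSo : IsOpen S) (hSconv : Convex ℝ S)
    (hScp : IsCompact (closure S)) (hScl : closure S ⊆ ω)
    (μ0 μ1 : Measure (Euc d)) [IsProbabilityMeasure μ0] [IsProbabilityMeasure μ1]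
    (h0K : IsCompact (msupport μ0)) (h1K : IsCompact (msupport μ1))
    (h0S : msupport μ0 ⊆ S) (h1S : msupport μ1 ⊆ S)
    (δ : ℝ) (hδ : 0 < δ) :
    ∃ (u : Euc d → ℝ → Euc d) (μ : ℝ → Measure (Euc d)),
      Measurable (fun q : Euc d × ℝ => u q.1 q.2) ∧
      (∀ x t, x ∉ ω → u x t = 0) ∧
      (∀ t ∈ Icc (0:ℝ) δ, IsCompact (msupport (μ t))) ∧
      IsWeakSolutionOn δ (fun x t => v x + u x t) μ ∧
      μ 0 = μ0 ∧
      (∀ t ∈ Icc (0:ℝ) δ, msupport (μ t) ⊆ S) ∧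
      μ δ = μ1 := by
  classical
  obtain ⟨x0, hx0⟩ := hS
  set c : ℝ := δ / 2 with hcdef
  have hc : 0 < c := by positivity
  obtain ⟨R, hR0, hR⟩ : ∃ R : ℝ, 0 ≤ R ∧ ∀ x ∈ closure S, ‖x - x0‖ ≤ R := by
    obtain ⟨R, hR⟩ := hScp.isBounded.subset_closedBall x0
    refine ⟨R, ?_, fun x hx => ?_⟩
    · simpa using (norm_nonneg _).trans (mem_closedBall_iff_norm.1 (hR (subset_closure hx0)))
    · exact mem_closedBall_iff_norm.1 (hR hx)
  let ν : ℝ → Measure (Euc d) := fun t => if t < c then μ0 else μ1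
  have hνp : ∀ t, IsProbabilityMeasure (ν t) := by
    intro t; simp only [ν]; split_ifs <;> infer_instance
  have hνK : ∀ t, IsCompact (msupport (ν t)) := by
    intro t; simp only [ν]; split_ifs <;> assumption
  have hνS : ∀ t, msupport (ν t) ⊆ S := by
    intro t; simp only [ν]; split_ifs <;> assumption
  let σ : ℝ → ℝ := fun t => |t - c| / c
  have hσ0 : ∀ t, 0 ≤ σ t := fun t => by simp only [σ]; positivity
  have hσ1 : ∀ t ∈ Icc (0:ℝ) δ, σ t ≤ 1 := by
    intro t ht
    simp only [σ]
    rw [div_le_one hc, abs_le]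
    constructor <;> linarith [ht.1, ht.2]
  let μ : ℝ → Measure (Euc d) := fun t => (ν t).map (homo x0 (σ t))
  have hμp : ∀ t, IsProbabilityMeasure (μ t) := fun t =>
    Measure.isProbabilityMeasure_map (homo_cont x0 _).measurable.aemeasurable
  let u : Euc d → ℝ → Euc d := fun x t => if x ∈ ω then (t - c)⁻¹ • (x - x0) - v x else 0
  have hvc : Continuous v := by
    obtain ⟨K, hK⟩ := hvL
    exact hK.continuous
  have hsup : ∀ t ∈ Icc (0:ℝ) δ, msupport (μ t) ⊆ S := by
    intro t ht x hx
    obtain ⟨y, hy, rfl⟩ := msupport_map (ν t) (hνK t) (homo_cont x0 (σ t)) hx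
    exact homo_mem hSconv hx0 (hνS t hy) (hσ0 t) (hσ1 t ht)
  have hwae : ∀ t ∈ Icc (0:ℝ) δ, ∀ᵐ z ∂(μ t), v z + u z t = (t - c)⁻¹ • (z - x0) := by
    intro t ht
    filter_upwards [msupport_ae (μ t)] with z hz
    have : z ∈ ω := hScl (subset_closure (hsup t ht hz))
    simp [u, this]
  have hid : ∀ m : Measure (Euc d), m.map (homo x0 1) = m := by
    intro m
    have : homo x0 1 = id := by ext x; simp [homo]
    rw [this, Measure.map_id]
  have hμ0 : μ 0 = μ0 := by
    have h1 : σ 0 = 1 := by simp [σ, abs_of_pos hc, hc.ne']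
    simp only [μ, ν, h1, hid, if_pos hc]
  have hμδ : μ δ = μ1 := by
    have h2 : δ - c = c := by simp only [hcdef]; ring
    have h1 : σ δ = 1 := by simp [σ, h2, abs_of_pos hc, hc.ne']
    have h3 : ¬ δ < c := by linarith
    simp only [μ, ν, h1, hid, if_neg h3]
  refine ⟨u, μ, ?_, ?_, ?_, ⟨?_, ?_⟩, hμ0, hsup, hμδ⟩
  · refine Measurable.ite (hωo.measurableSet.preimage measurable_fst) ?_ measurable_const
    have := hvc.measurable
    fun_prop
  · intro x t hx
    simp [u, hx]
  · intro t ht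
    exact ((hνK t).image (homo_cont x0 (σ t))).of_isClosed_subset (isClosed_msupport _)
      (msupport_map (ν t) (hνK t) (homo_cont x0 (σ t)))
  · -- finiteness of the total momentum
    have hb : ∀ t ∈ Icc (0:ℝ) δ,
        ∫⁻ x, (‖v x + u x t‖₊ : ℝ≥0∞) ∂(μ t) ≤ ENNReal.ofReal (c⁻¹ * R) := by
      intro t ht
      have h1 : ∀ᵐ z ∂(μ t), ‖(t - c)⁻¹ • (z - x0)‖ ≤ c⁻¹ * R := by
        rw [ae_map_iff (homo_cont x0 _).measurable.aemeasurable
          (isClosed_le (by fun_prop) continuous_const).measurableSet]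
        filter_upwards [msupport_ae (ν t)] with x hx
        have h3 := hR x (subset_closure (hνS t hx))
        have h4 : homo x0 (σ t) x - x0 = σ t • (x - x0) := by simp [homo]
        rw [h4, smul_smul, norm_smul]
        refine mul_le_mul ?_ h3 (norm_nonneg _) (by positivity)
        simp only [σ, norm_mul, Real.norm_eq_abs, abs_inv, abs_div, abs_abs, abs_of_pos hc]
        rcases eq_or_ne (t - c) 0 with h | h
        · simp [h, hc.le]
        · have : |t - c| ≠ 0 := abs_ne_zero.2 h
          apply le_of_eq
          field_simp
      have h2 : ∀ᵐ z ∂(μ t), (‖v z + u z t‖₊ : ℝ≥0∞) ≤ ENNReal.ofReal (c⁻¹ * R) := by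
        filter_upwards [h1, hwae t ht] with z hz1 hz2
        rw [hz2, ← enorm_eq_nnnorm, ← ofReal_norm]
        exact ENNReal.ofReal_le_ofReal hz1
      have := hμp t
      refine (lintegral_mono_ae h2).trans ?_
      simp
    refine (setLIntegral_mono measurable_const hb).trans_lt ?_
    rw [setLIntegral_const]
    exact ENNReal.mul_lt_top ENNReal.ofReal_lt_top (by simp)
  · intro ψ hψ hψs t ht
    have hRae : ∀ s, ∀ᵐ x ∂(ν s), ‖x - x0‖ ≤ R := by
      intro s
      filter_upwards [msupport_ae (ν s)] with x hx using hR x (subset_closure (hνS s hx))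
    have hR0' : ∀ᵐ x ∂μ0, ‖x - x0‖ ≤ R := by
      filter_upwards [msupport_ae μ0] with x hx using hR x (subset_closure (h0S hx))
    have hR1' : ∀ᵐ x ∂μ1, ‖x - x0‖ ≤ R := by
      filter_upwards [msupport_ae μ1] with x hx using hR x (subset_closure (h1S hx))
    obtain ⟨d0, k0⟩ := deriv_homo x0 μ0 R hR0' ψ hψ hψs
    obtain ⟨d1, k1⟩ := deriv_homo x0 μ1 R hR1' ψ hψ hψs
    have main := path_ftc _ _ _ _ d0 d1 k0 k1 (by simp [homo]) c hc t ht.1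
    have hint : ∀ s, ∫ x, ψ x ∂(μ s) = ∫ x, ψ (homo x0 (σ s) x) ∂(ν s) := fun s =>
      integral_map (homo_cont x0 _).measurable.aemeasurable
        hψ.continuous.aestronglyMeasurable
    have hσl : ∀ s, s < c → σ s = (c - s) / c := fun s hs => by
      simp only [σ]; rw [abs_of_neg (by linarith)]; ring
    have hσr : ∀ s, ¬ s < c → σ s = (s - c) / c := fun s hs => by
      simp only [σ]; rw [abs_of_nonneg (by linarith)]
    have hL : ∫ x, ψ x ∂(μ t) = if t < c then ∫ x, ψ (homo x0 ((c - t) / c) x) ∂μ0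
        else ∫ x, ψ (homo x0 ((t - c) / c) x) ∂μ1 := by
      rw [hint]
      split_ifs with h
      · simp only [ν, if_pos h, hσl t h]
      · simp only [ν, if_neg h, hσr t h]
    have hL0 : ∫ x, ψ x ∂(μ 0) = ∫ x, ψ (homo x0 1 x) ∂μ0 := by
      rw [hμ0]; simp [homo]
    rw [hL, hL0]
    refine main.trans ?_
    refine integral_congr_ae ?_
    have hne : ∀ᵐ s ∂(volume.restrict (Icc (0:ℝ) t)), s ≠ c :=
      ae_restrict_of_ae (Measure.ae_ne volume c)
    filter_upwards [hne, ae_restrict_mem measurableSet_Icc] with s hs hst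
    have hsδ : s ∈ Icc (0:ℝ) δ := ⟨hst.1, hst.2.trans ht.2⟩
    have hsc : s - c ≠ 0 := sub_ne_zero.2 hs
    have hw := weak_integrand x0 (ν s) (σ s) ((s - c)⁻¹) ψ hψ (fun z => v z + u z s)
      (hwae s hsδ)
    refine Eq.trans ?_ hw.symm
    split_ifs with h
    · have : (s - c)⁻¹ * ((c - s) / c) = -c⁻¹ := by field_simp; ring
      simp only [ν, if_pos h, hσl s h, this]
    · have : (s - c)⁻¹ * ((s - c) / c) = c⁻¹ := by field_simp
      simp only [ν, if_neg h, hσr s h, this]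
end
end

section
/- Define u : ℝ → ℝ by u(x) = √x for x ≥ 0 and u(x) = 0 for x < 0, and for t ≥ 0 define Φ_t : ℝ → ℝ by Φ_t(x) = x for x < 0 and Φ_t(x) = (t/2 + √x)² for x ≥ 0. Then: (a) for each x ∈ ℝ, t ↦ Φ_t(x) is the solution of ẋ(t) = u(x(t)), x(0) = x; and (b) for each t ≥ 0, the pushforward Φ_t # (𝟙_{(−1,1)}(x) dx) of the restriction of the Lebesgue measure to (−1,1) equals the absolutely continuous measure with density 𝟙_{(−1,0)}(x) + (1 − t/(2√x))·𝟙_{(t²/4, (t/2+1)²)}(x) with respect to the Lebesgue measure. -/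
open MeasureTheory Set
open scoped ENNReal

noncomputable section

/-- The square-root vector field on `ℝ`. -/
def sqrtField (x : ℝ) : ℝ := if 0 ≤ x then Real.sqrt x else 0

/-- The associated flow map at time `t`. -/
def sqrtFlow (t x : ℝ) : ℝ := if x < 0 then x else (t / 2 + Real.sqrt x) ^ 2

/-- The flow of the square-root vector field solves the ODE, and it transports
the Lebesgue measure restricted to `(-1,1)` (a measure with connected support)
onto an explicit absolutely continuous measure whose support has two connected
components. -/
theorem sqrt_field_example :
    (∀ x : ℝ, sqrtFlow 0 x = x) ∧
    (∀ x : ℝ, ∀ t : ℝ, 0 ≤ t →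
      HasDerivWithinAt (fun s => sqrtFlow s x) (sqrtField (sqrtFlow t x)) (Ici (0:ℝ)) t) ∧
    (∀ t : ℝ, 0 ≤ t →
      (volume.restrict (Ioo (-1:ℝ) 1)).map (sqrtFlow t)
        = volume.withDensity (fun x => ENNReal.ofReal
            ((Ioo (-1:ℝ) 0).indicator (fun _ => (1:ℝ)) x
              + (Ioo (t ^ 2 / 4) ((t / 2 + 1) ^ 2)).indicator
                  (fun y => 1 - t / (2 * Real.sqrt y)) x))) := by
  refine ⟨?_, ?_, ?_⟩
  · intro x
    unfold sqrtFlow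
    split_ifs with h
    · rfl
    · rw [zero_div, zero_add, Real.sq_sqrt (not_lt.mp h)]
  · intro x t ht
    by_cases h : x < 0
    · have h2 : ¬ (0 ≤ x) := not_le.mpr h
      simp only [sqrtFlow, sqrtField, h, h2, if_true, if_false]
      exact hasDerivWithinAt_const _ _ _
    · have h0 : 0 ≤ t / 2 + Real.sqrt x := by positivity
      simp only [sqrtFlow, sqrtField, h, if_false]
      rw [if_pos (sq_nonneg _), Real.sqrt_sq h0]
      have h1 : HasDerivAt (fun s : ℝ => (s / 2 + Real.sqrt x) ^ 2) (t / 2 + Real.sqrt x) t := by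
        have := (((hasDerivAt_id t).div_const 2).add_const (Real.sqrt x)).pow 2
        refine this.congr_deriv ?_
        simp
        ring
      exact h1.hasDerivWithinAt
  · intro t ht
    have hm : Measurable (sqrtFlow t) := by
      unfold sqrtFlow
      exact Measurable.ite measurableSet_Iio measurable_id (by fun_prop)
    have hI : ∀ y ∈ Ioo (t ^ 2 / 4) ((t / 2 + 1) ^ 2),
        0 < y ∧ t / 2 < Real.sqrt y ∧ Real.sqrt y < t / 2 + 1 := by
      intro y hy
      refine ⟨lt_of_le_of_lt (by positivity) hy.1, ?_, ?_⟩
      · apply Real.lt_sqrt_of_sq_lt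
        linarith [hy.1]
      · rw [Real.sqrt_lt' (by positivity)]
        exact hy.2
    have hnn : ∀ y ∈ Ioo (t ^ 2 / 4) ((t / 2 + 1) ^ 2), 0 ≤ 1 - t / (2 * Real.sqrt y) := by
      intro y hy
      obtain ⟨h1, h2, h3⟩ := hI y hy
      have : 0 < Real.sqrt y := Real.sqrt_pos.mpr h1
      rw [sub_nonneg, div_le_one (by positivity)]
      linarith
    have hdens : (fun x => ENNReal.ofReal
            ((Ioo (-1:ℝ) 0).indicator (fun _ => (1:ℝ)) x
              + (Ioo (t ^ 2 / 4) ((t / 2 + 1) ^ 2)).indicator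
                  (fun y => 1 - t / (2 * Real.sqrt y)) x)) =
        fun x => (Ioo (-1:ℝ) 0).indicator (fun _ => (1:ℝ≥0∞)) x
          + (Ioo (t ^ 2 / 4) ((t / 2 + 1) ^ 2)).indicator
              (fun y => ENNReal.ofReal (|1 - t / (2 * Real.sqrt y)|)) x := by
      funext x
      rw [ENNReal.ofReal_add (indicator_nonneg (fun _ _ => zero_le_one) x)
        (indicator_nonneg hnn x)]
      congr 1
      · by_cases hx : x ∈ Ioo (-1:ℝ) 0 <;> simp only [indicator, hx, if_true, if_false] <;> simp
      · by_cases hx : x ∈ Ioo (t ^ 2 / 4) ((t / 2 + 1) ^ 2)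
        · rw [indicator_of_mem hx, indicator_of_mem hx, abs_of_nonneg (hnn x hx)]
        · rw [indicator_of_notMem hx, indicator_of_notMem hx, ENNReal.ofReal_zero]
    rw [hdens]
    ext s hs
    rw [withDensity_apply _ hs, lintegral_add_left (by measurability),
      lintegral_indicator measurableSet_Ioo, lintegral_indicator measurableSet_Ioo,
      Measure.restrict_restrict measurableSet_Ioo, Measure.restrict_restrict measurableSet_Ioo,
      setLIntegral_one, Measure.map_apply hm hs, Measure.restrict_apply (hm hs)]
    have hinj : InjOn (fun y : ℝ => (Real.sqrt y - t / 2) ^ 2)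
        (Ioo (t ^ 2 / 4) ((t / 2 + 1) ^ 2) ∩ s) := by
      intro a ha b hb hab
      obtain ⟨h1, h2, h3⟩ := hI a ha.1
      obtain ⟨h1', h2', h3'⟩ := hI b hb.1
      have h4 := (sq_eq_sq₀ (by linarith) (by linarith)).mp hab
      exact (Real.sqrt_inj h1.le h1'.le).mp (by linarith)
    have hder : ∀ y ∈ Ioo (t ^ 2 / 4) ((t / 2 + 1) ^ 2) ∩ s,
        HasDerivWithinAt (fun y : ℝ => (Real.sqrt y - t / 2) ^ 2) (1 - t / (2 * Real.sqrt y))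
          (Ioo (t ^ 2 / 4) ((t / 2 + 1) ^ 2) ∩ s) y := by
      intro y hy
      obtain ⟨h1, h2, h3⟩ := hI y hy.1
      have : 0 < Real.sqrt y := Real.sqrt_pos.mpr h1
      have h5 := ((Real.hasDerivAt_sqrt h1.ne').sub_const (t / 2)).pow 2
      refine (h5.congr_deriv ?_).hasDerivWithinAt
      simp
      field_simp
    have himg := lintegral_image_eq_lintegral_abs_deriv_mul
      (measurableSet_Ioo.inter hs) hder hinj (fun _ => 1)
    simp only [mul_one, setLIntegral_one] at himg
    rw [← himg]
    have himeq : (fun y : ℝ => (Real.sqrt y - t / 2) ^ 2) ''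
        (Ioo (t ^ 2 / 4) ((t / 2 + 1) ^ 2) ∩ s) = sqrtFlow t ⁻¹' s ∩ Ioo 0 1 := by
      ext x
      constructor
      · rintro ⟨y, hy, rfl⟩
        obtain ⟨h1, h2, h3⟩ := hI y hy.1
        refine ⟨?_, ?_, ?_⟩
        · have : sqrtFlow t ((Real.sqrt y - t / 2) ^ 2) = y := by
            unfold sqrtFlow
            rw [if_neg (not_lt.mpr (sq_nonneg _)), Real.sqrt_sq (by linarith)]
            rw [add_sub_cancel, Real.sq_sqrt h1.le]
          change sqrtFlow t ((Real.sqrt y - t / 2) ^ 2) ∈ s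
          rw [this]
          exact hy.2
        · change 0 < (Real.sqrt y - t / 2) ^ 2
          have : 0 < Real.sqrt y - t / 2 := by linarith
          positivity
        · change (Real.sqrt y - t / 2) ^ 2 < 1
          nlinarith
      · rintro ⟨hx, hx0, hx1⟩
        have hp : 0 < Real.sqrt x := Real.sqrt_pos.mpr hx0
        have hp1 : Real.sqrt x < 1 := by
          rw [Real.sqrt_lt' one_pos]
          simpa using hx1
        have he : sqrtFlow t x = (t / 2 + Real.sqrt x) ^ 2 := if_neg (not_lt.mpr hx0.le)
        rw [mem_preimage, he] at hx
        refine ⟨_, ⟨⟨?_, ?_⟩, hx⟩, ?_⟩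
        · nlinarith [mul_nonneg ht hp.le]
        · gcongr
        · change (Real.sqrt ((t / 2 + Real.sqrt x) ^ 2) - t / 2) ^ 2 = x
          rw [Real.sqrt_sq (by positivity), add_sub_cancel_left, Real.sq_sqrt hx0.le]
    rw [himeq]
    have hneg : Ioo (-1:ℝ) 0 ∩ s = sqrtFlow t ⁻¹' s ∩ Ioo (-1) 0 := by
      ext x
      have : x < 0 → sqrtFlow t x = x := fun h => if_pos h
      simp only [mem_inter_iff, mem_preimage, mem_Ioo]
      constructor
      · rintro ⟨h, h'⟩
        exact ⟨by rwa [this h.2], h⟩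
      · rintro ⟨h, h'⟩
        exact ⟨h', by rwa [this h'.2] at h⟩
    rw [hneg, ← measure_union _ ((hm hs).inter measurableSet_Ioo), ← inter_union_distrib_left]
    · apply measure_congr
      apply (ae_eq_refl _).inter
      have hz : ∀ᵐ x : ℝ, x ≠ 0 := by
        simp [ae_iff]
      filter_upwards [hz] with x hx
      apply propext
      change x ∈ Ioo (-1:ℝ) 1 ↔ x ∈ Ioo (-1:ℝ) 0 ∪ Ioo 0 1
      simp only [mem_union, mem_Ioo]
      constructor
      · rintro ⟨h, h'⟩
        rcases lt_or_gt_of_ne hx with h0 | h0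
        · exact Or.inl ⟨h, h0⟩
        · exact Or.inr ⟨h0, h'⟩
      · rintro (h | h) <;> constructor <;> linarith [h.1, h.2]
    · rw [Set.disjoint_left]
      rintro x ⟨_, h⟩ ⟨_, h'⟩
      exact lt_asymm h.2 h'.1
end
end
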